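/- arXiv:1104.5007 — 2 statements merged into one kernel-verified Lean document; each statement's English description precedes it below -/
import Mathlib

section
/- For every ε > 0 there exists n₀ such that for every integer n ≥ n₀, the maximum size r₃(n) of a family of n-permutations with VC-dimension at most 3 satisfies r₃(n) ≤ α(n)^{(4+ε)·n}. -/
/-! ## Inverse Ackermann hierarchy -/

/-- Bounded-fuel iteration counter: number of applications of `f` needed to bring `m`
down to a value `≤ 1` (assuming `f` strictly decreases on values `≥ 2`). -/
def iterCount (f : ℕ → ℕ) : ℕ → ℕ → ℕ
  | 0, _ => 0
  | fuel + 1, m => if m ≤ 1 then 0 else 1 + iterCount f fuel (f m)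

/-- The inverse Ackermann hierarchy: `alphaHier 1 m = ⌈m/2⌉`, `alphaHier d 1 = 0` for `d ≥ 2`,
and `alphaHier d m = 1 + alphaHier d (alphaHier (d-1) m)` for `m, d ≥ 2`. -/
def alphaHier : ℕ → ℕ → ℕ
  | 0, m => m
  | 1, m => (m + 1) / 2
  | d + 2, m => iterCount (alphaHier (d + 1)) m m

/-- The inverse Ackermann function `α(m) = min {k ≥ 1 : α_k(m) ≤ 3}`. -/
noncomputable def invAck (m : ℕ) : ℕ := sInf {k : ℕ | 1 ≤ k ∧ alphaHier k m ≤ 3}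

/-! ## Permutations, restrictions, VC-dimension -/

/-- The restriction of the `n`-permutation `π` to the (increasing) `k`-tuple of positions `a`
is the `k`-permutation `σ`. -/
def PermRestrictionIs {n k : ℕ} (π : Equiv.Perm (Fin n)) (a : Fin k → Fin n)
    (σ : Equiv.Perm (Fin k)) : Prop :=
  ∀ i j : Fin k, σ i < σ j ↔ π (a i) < π (a j)

/-- The `k`-tuple of positions `a` is shattered by the family `P` of `n`-permutations. -/
def Shatters {n k : ℕ} (P : Finset (Equiv.Perm (Fin n))) (a : Fin k → Fin n) : Prop :=
  StrictMono a ∧ ∀ σ : Equiv.Perm (Fin k), ∃ π ∈ P, PermRestrictionIs π a σ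

/-- The family `P` of `n`-permutations has VC-dimension at most `k`:
no `(k+1)`-tuple of positions is shattered by `P`. -/
def VCDimLE (n k : ℕ) (P : Finset (Equiv.Perm (Fin n))) : Prop :=
  ∀ a : Fin (k + 1) → Fin n, ¬ Shatters P a

/-- The number of `1`-entries of the union of the permutation matrices of a family `P`
of `n`-permutations. -/
noncomputable def permOnes {n : ℕ} (P : Finset (Equiv.Perm (Fin n))) : ℕ :=
  Nat.card {p : Fin n × Fin n // ∃ π ∈ P, π p.2 = p.1}

/-- `v(P) = |M_P| / n`, the average number of `1`-entries per column of the union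
of the permutation matrices of the family `P`. -/
noncomputable def vPerm {n : ℕ} (P : Finset (Equiv.Perm (Fin n))) : ℝ :=
  (permOnes P : ℝ) / (n : ℝ)

/-! ## (0,1)-matrices -/

/-- The number of `1`-entries of a `(0,1)`-matrix (represented as a `Bool` matrix). -/
noncomputable def matOnes {m n : ℕ} (M : Fin m → Fin n → Bool) : ℕ :=
  Nat.card {p : Fin m × Fin n // M p.1 p.2 = true}

/-- The number of `1`-entries in column `j` of a `(0,1)`-matrix. -/
noncomputable def colOnes {m n : ℕ} (M : Fin m → Fin n → Bool) (j : Fin n) : ℕ :=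
  Nat.card {i : Fin m // M i j = true}

/-- The matrix `B` contains the matrix `S`. -/
def MatContains {m n p q : ℕ} (B : Fin m → Fin n → Bool) (S : Fin p → Fin q → Bool) : Prop :=
  ∃ (r : Fin p → Fin m) (c : Fin q → Fin n), StrictMono r ∧ StrictMono c ∧
    ∀ a b, S a b = true → B (r a) (c b) = true

/-- The `s × 2` matrix `DS_s`, with a `1`-entry in (1-indexed) row `i` and column `j`
exactly when `i + j` is odd. -/
def DS (s : ℕ) : Fin s → Fin 2 → Bool :=
  fun i j => decide ((i.val + j.val) % 2 = 1)

/-- The maximum number of `1`-entries in an `n × n` matrix avoiding `S`. -/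
noncomputable def exMat {p q : ℕ} (S : Fin p → Fin q → Bool) (n : ℕ) : ℕ :=
  sSup {x : ℕ | ∃ M : Fin n → Fin n → Bool, ¬ MatContains M S ∧ matOnes M = x}

/-- An `n × n` matrix is `k`-full if some increasing `k`-tuple of columns contains
every `k`-permutation matrix. -/
def IsFull (k : ℕ) {n : ℕ} (M : Fin n → Fin n → Bool) : Prop :=
  ∃ c : Fin k → Fin n, StrictMono c ∧ ∀ σ : Equiv.Perm (Fin k),
    ∃ r : Fin k → Fin n, StrictMono r ∧ ∀ b : Fin k, M (r (σ b)) (c b) = true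

/-- `pFull k n` is the maximum number of `1`-entries in an `n × n` matrix that is
not `(k+1)`-full. -/
noncomputable def pFull (k n : ℕ) : ℕ :=
  sSup {x : ℕ | ∃ M : Fin n → Fin n → Bool, ¬ IsFull (k + 1) M ∧ matOnes M = x}

/-! ## Formations -/

/-- `M` contains a `B`-fat `(r,s)`-formation: there are an `s`-partition of the rows into
intervals (the fibers of a monotone map `g`) and `r` columns, each having at least `B`
`1`-entries in every interval. -/
def FatFormation (B r s : ℕ) {m n : ℕ} (M : Fin m → Fin n → Bool) : Prop :=
  ∃ g : Fin m → Fin s, Monotone g ∧ ∃ c : Fin r → Fin n, StrictMono c ∧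
    ∀ (j : Fin r) (i : Fin s), B ≤ Nat.card {x : Fin m // g x = i ∧ M x (c j) = true}

/-- `M` contains a doubled `(r,s)`-formation: there are an `s`-partition of the rows into
intervals and `r` columns, each having at least one `1`-entry in the first and last
interval and at least two `1`-entries in every other interval. -/
def DoubledFormation (r s : ℕ) {m n : ℕ} (M : Fin m → Fin n → Bool) : Prop :=
  ∃ g : Fin m → Fin s, Monotone g ∧ ∃ c : Fin r → Fin n, StrictMono c ∧
    ∀ (j : Fin r) (i : Fin s),
      1 ≤ Nat.card {x : Fin m // g x = i ∧ M x (c j) = true} ∧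
      (i.val ≠ 0 → i.val ≠ s - 1 → 2 ≤ Nat.card {x : Fin m // g x = i ∧ M x (c j) = true})

/-! ## The functions R, D, β -/

/-- Nivasch's hierarchy `R_s(d)` (shifted as in the paper). -/
def Rfun : ℕ → ℕ → ℕ
  | 0, _ => 0
  | 1, _ => 0
  | 2, _ => 2
  | 3, _ => 3
  | 4, d => 2 * d + 1
  | _ + 5, 0 => 0
  | _ + 5, 1 => 0
  | s + 5, 2 => 2 ^ (s + 3) + 1
  | s + 5, d + 3 =>
      2 * (Rfun (s + 4) (d + 3) - 1) + (Rfun (s + 3) (d + 3) - 1) * (Rfun (s + 5) (d + 2) - 3) + 1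
  termination_by s d => (s, d)

/-- The hierarchy `D_s(d)`. -/
def Dfun : ℕ → ℕ → ℕ
  | 0, _ => 0
  | 1, _ => 0
  | 2, _ => 2
  | _ + 3, 0 => 0
  | _ + 3, 1 => 0
  | s + 3, 2 => 2 ^ (s + 2) + 2 ^ (s + 1) - 1
  | s + 3, d + 3 =>
      2 * Dfun (s + 2) (d + 3) + (Dfun (s + 1) (d + 3) + 1) * (Rfun (s + 3) (d + 2) - 3)
        + Dfun (s + 3) (d + 2) - Rfun (s + 3) (d + 2) + 1
  termination_by s d => (s, d)

/-- `β_s(m) = D_s(α(m))`. -/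
noncomputable def betaFun (s m : ℕ) : ℕ := Dfun s (invAck m)

/-! ## Sequences: MST and formations in sequences -/

/-- The list of column indices of the `1`-entries of a row, in increasing order. -/
def rowList {n : ℕ} (row : Fin n → Bool) : List (Fin n) :=
  (List.finRange n).filter (fun j => row j)

/-- The matrix → sequence transformation: read the rows top to bottom, writing for each
`1`-entry the index of its column. -/
def MST {m n : ℕ} (M : Fin m → Fin n → Bool) : List (Fin n) :=
  ((List.finRange m).map (fun i => rowList (M i))).flatten

/-- The list `L` contains an `(r,s)`-formation as a subsequence: a concatenation of `s`
permutations of the same `r`-element set of symbols is a sublist of `L`. -/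
def IsFormationSeq {A : Type*} [DecidableEq A] (r s : ℕ) (L : List A) : Prop :=
  ∃ (T : Finset A) (F : List (List A)), T.card = r ∧ F.length = s ∧
    (∀ l ∈ F, l.Nodup ∧ l.toFinset = T) ∧ List.Sublist F.flatten L

namespace RThree

/-! ## The inverse Ackermann hierarchy -/

lemma iterCount_fuel (f : ℕ → ℕ) (hf : ∀ m, 2 ≤ m → f m < m) :
    ∀ m a b, m ≤ a → m ≤ b → iterCount f a m = iterCount f b m := by
  intro m
  induction m using Nat.strong_induction_on with
  | _ m ih =>
    intro a b ha hb
    by_cases hm : m ≤ 1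
    · cases a <;> cases b <;> simp [iterCount, hm]
    · obtain ⟨a, rfl⟩ : ∃ a', a = a' + 1 := ⟨a - 1, by omega⟩
      obtain ⟨b, rfl⟩ : ∃ a', b = a' + 1 := ⟨b - 1, by omega⟩
      have h := hf m (by omega)
      simp only [iterCount, hm, if_false]
      rw [ih (f m) h a b (by omega) (by omega)]

lemma alpha_le_one (d m : ℕ) (hm : m ≤ 1) : alphaHier (d + 2) m = 0 := by
  simp only [alphaHier]
  cases m <;> simp [iterCount, hm]

lemma iterCount_step (f : ℕ → ℕ) (hf : ∀ m, 2 ≤ m → f m < m) (m : ℕ) (hm : 2 ≤ m) :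
    iterCount f m m = 1 + iterCount f (f m) (f m) := by
  obtain ⟨a, rfl⟩ : ∃ a', m = a' + 1 := ⟨m - 1, by omega⟩
  have h := hf _ hm
  have h1 : ¬ (a + 1 ≤ 1) := by omega
  conv_lhs => simp only [iterCount, h1, if_false]
  rw [iterCount_fuel f hf (f (a+1)) a (f (a+1)) (by omega) le_rfl]

lemma alpha_lt (d : ℕ) : ∀ m, 2 ≤ m → alphaHier (d + 1) m < m := by
  induction d with
  | zero => intro m hm; simp only [alphaHier]; omega
  | succ d ihd =>
    intro m
    induction m using Nat.strong_induction_on with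
    | _ m ih =>
      intro hm
      have h1 := ihd m hm
      have h2 : alphaHier (d + 1 + 1) m = 1 + alphaHier (d + 1 + 1) (alphaHier (d + 1) m) := by
        simp only [alphaHier]
        exact iterCount_step _ ihd m hm
      rw [h2]
      by_cases hx : alphaHier (d + 1) m ≤ 1
      · rw [alpha_le_one d _ hx]; omega
      · have := ih _ h1 (by omega)
        omega

lemma alpha_step (d m : ℕ) (hm : 2 ≤ m) :
    alphaHier (d + 2) m = 1 + alphaHier (d + 2) (alphaHier (d + 1) m) := by
  simp only [alphaHier]
  exact iterCount_step _ (alpha_lt d) m hm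

lemma alpha_mono (d : ℕ) : ∀ m m', m ≤ m' → alphaHier (d + 1) m ≤ alphaHier (d + 1) m' := by
  induction d with
  | zero => intro m m' hm; simp only [alphaHier]; omega
  | succ d ihd =>
    intro m m'
    induction m' using Nat.strong_induction_on generalizing m with
    | _ m' ih =>
      intro hm
      by_cases h : m ≤ 1
      · rw [alpha_le_one d _ h]; omega
      · rw [alpha_step d m (by omega), alpha_step d m' (by omega)]
        have := ih _ (alpha_lt d m' (by omega)) _ (ihd m m' hm)
        simp only [Nat.add_assoc, Nat.reduceAdd] at *
        omega

lemma alpha_pos (d m : ℕ) (hm : 2 ≤ m) : 1 ≤ alphaHier (d + 2) m := by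
  rw [alpha_step d m hm]; omega

lemma alpha_antitone_succ (d m : ℕ) : alphaHier (d + 3) m ≤ alphaHier (d + 2) m := by
  by_cases hm : m ≤ 1
  · rw [alpha_le_one (d + 1) _ hm]; omega
  · have h := alpha_step (d + 1) m (by omega)
    have h1 := alpha_pos d m (by omega)
    simp only [Nat.add_assoc, Nat.reduceAdd] at *
    by_cases hx : alphaHier (d + 2) m ≤ 1
    · rw [h, alpha_le_one (d + 1) _ hx]; omega
    · have := alpha_lt (d + 2) (alphaHier (d + 2) m) (by omega)
      simp only [Nat.add_assoc, Nat.reduceAdd] at *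
      omega

lemma alpha_le_two (d m : ℕ) : alphaHier (d + 2) m ≤ alphaHier 2 m := by
  induction d with
  | zero => exact le_rfl
  | succ d ih => exact (alpha_antitone_succ d m).trans ih

lemma two_pow_alpha_two : ∀ m, 2 ≤ m → 2 ^ (alphaHier 2 m) + 2 ≤ 2 * m := by
  intro m
  induction m using Nat.strong_induction_on with
  | _ m ih =>
    intro hm
    have h := alpha_step 0 m hm
    simp only [Nat.zero_add] at h
    have h1 : alphaHier 1 m = (m + 1) / 2 := by simp only [alphaHier]
    rw [h1] at h
    rw [h]
    by_cases hx : (m + 1) / 2 ≤ 1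
    · rw [alpha_le_one 0 _ hx]; omega
    · have := ih ((m + 1) / 2) (by omega) (by omega)
      rw [pow_add]
      omega

lemma alpha_two_sq (m : ℕ) : alphaHier 2 m * alphaHier 2 m ≤ 2 * m := by
  by_cases hm : m ≤ 1
  · rw [alpha_le_one 0 _ hm]; omega
  · refine le_trans ?_ (two_pow_alpha_two m (by omega))
    generalize alphaHier 2 m = a
    induction a with
    | zero => simp
    | succ a ih =>
      by_cases ha : a ≤ 3
      · interval_cases a <;> norm_num
      · rw [pow_succ]
        nlinarith

lemma alpha_two_add_two (m : ℕ) (hm : 4 ≤ m) : alphaHier 2 m + 2 ≤ m := by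
  have h := two_pow_alpha_two m (by omega)
  by_contra hc
  have h1 : m - 1 ≤ alphaHier 2 m := by omega
  have h2 := Nat.pow_le_pow_right (n := 2) (by norm_num) h1
  have h3 : ∀ x, 2 * (x + 4) < 2 ^ (x + 3) + 2 := by
    intro x
    induction x with
    | zero => norm_num
    | succ x ih => rw [show x + 1 + 3 = (x + 3) + 1 by ring, pow_succ]; omega
  have h4 := h3 (m - 4)
  rw [show m - 4 + 3 = m - 1 by omega, show m - 4 + 4 = m by omega] at h4
  omega

lemma exists_alpha_le (m : ℕ) : ∃ k, 1 ≤ k ∧ alphaHier k m ≤ 3 := by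
  by_contra hc
  push Not at hc
  have : ∀ d, alphaHier (d + 1) m + d ≤ alphaHier 1 m := by
    intro d
    induction d with
    | zero => simp
    | succ d ih =>
      have h0 := hc (d + 1) (by omega)
      have h1 : 2 ≤ m := by
        by_contra hm
        have := hc 2 (by omega)
        rw [alpha_le_one 0 m (by omega)] at this
        omega
      have h2 := alpha_step d m h1
      have h3 := alpha_le_two d (alphaHier (d + 1) m)
      have h4 := alpha_two_add_two (alphaHier (d + 1) m) (by omega)
      simp only [Nat.add_assoc, Nat.reduceAdd] at *
      omega
  have h := this (alphaHier 1 m + 1)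
  omega

lemma alpha_unbounded (d K : ℕ) : ∃ N, ∀ m, N ≤ m → K ≤ alphaHier (d + 1) m := by
  induction d generalizing K with
  | zero => exact ⟨2 * K, fun m hm => by simp only [alphaHier]; omega⟩
  | succ d ihd =>
    induction K with
    | zero => exact ⟨0, fun m _ => Nat.zero_le _⟩
    | succ K ihK =>
      obtain ⟨N, hN⟩ := ihK
      obtain ⟨N', hN'⟩ := ihd N
      refine ⟨max N' 2, fun m hm => ?_⟩
      have h1 := hN _ (hN' m (le_trans (le_max_left _ _) hm))
      have h2 := alpha_step d m (le_trans (le_max_right _ _) hm)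
      simp only [Nat.add_assoc, Nat.reduceAdd] at *
      omega

lemma invAck_spec (m : ℕ) : 1 ≤ invAck m ∧ alphaHier (invAck m) m ≤ 3 :=
  Nat.sInf_mem (s := {k : ℕ | 1 ≤ k ∧ alphaHier k m ≤ 3}) (exists_alpha_le m)

lemma invAck_unbounded (K : ℕ) : ∃ N, ∀ m, N ≤ m → K ≤ invAck m := by
  have : ∃ N, ∀ m, N ≤ m → ∀ d, d < K → 4 ≤ alphaHier (d + 1) m := by
    induction K with
    | zero => exact ⟨0, fun m _ d hd => by omega⟩
    | succ K ih =>
      obtain ⟨N, hN⟩ := ih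
      obtain ⟨N', hN'⟩ := alpha_unbounded K 4
      refine ⟨max N N', fun m hm d hd => ?_⟩
      rcases Nat.lt_succ_iff_lt_or_eq.1 hd with h | rfl
      · exact hN m (le_trans (le_max_left _ _) hm) d h
      · exact hN' m (le_trans (le_max_right _ _) hm)
  obtain ⟨N, hN⟩ := this
  refine ⟨N, fun m hm => ?_⟩
  by_contra hc
  obtain ⟨h1, h2⟩ := invAck_spec m
  have := hN m hm (invAck m - 1) (by omega)
  rw [show invAck m - 1 + 1 = invAck m by omega] at this
  omega

/-! ## Formation-free matrices -/

open Finset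

/-- A (4,4)-formation in the matrix whose columns are indexed by `C`, the column `x`
having its 1-entries in the rows `S x`. -/
def Form {ι : Type*} (C : Finset ι) (S : ι → Finset ℕ) : Prop :=
  ∃ T : Finset ι, T ⊆ C ∧ T.card = 4 ∧ ∃ a b c : ℕ, ∀ x ∈ T,
    (∃ r ∈ S x, r < a) ∧ (∃ r ∈ S x, a ≤ r ∧ r < b) ∧ (∃ r ∈ S x, b ≤ r ∧ r < c) ∧
      (∃ r ∈ S x, c ≤ r)

lemma double_count {ι : Type*} (G : Finset ι) (V : ι → Finset ℕ) (u m : ℕ)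
    (hV : ∀ x ∈ G, V x ⊆ Finset.Ico u (u + m))
    (h4 : ∀ r, ∀ T : Finset ι, T ⊆ G → T.card = 4 → ¬ ∀ x ∈ T, r ∈ V x) :
    ∑ x ∈ G, (V x).card ≤ 3 * m := by
  classical
  have h1 : ∑ x ∈ G, (V x).card = ∑ x ∈ G, ∑ r ∈ Finset.Ico u (u + m), if r ∈ V x then 1 else 0 := by
    refine Finset.sum_congr rfl fun x hx => ?_
    rw [← Finset.sum_filter, ← Finset.card_eq_sum_ones]
    congr 1
    ext r
    simp only [Finset.mem_filter]
    exact ⟨fun h => ⟨hV x hx h, h⟩, fun h => h.2⟩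
  rw [h1, Finset.sum_comm]
  have h2 : ∀ r ∈ Finset.Ico u (u + m), (∑ x ∈ G, if r ∈ V x then 1 else 0) ≤ 3 := by
    intro r _
    rw [← Finset.sum_filter, ← Finset.card_eq_sum_ones]
    by_contra hc
    push Not at hc
    obtain ⟨T, hT, hc4⟩ := Finset.exists_subset_card_eq (Nat.succ_le_of_lt hc)
    exact h4 r T (hT.trans (Finset.filter_subset _ _)) hc4
      (fun x hx => (Finset.mem_filter.1 (hT hx)).2)
  refine (Finset.sum_le_sum h2).trans ?_
  simp [mul_comm]

lemma recursion {ι : Type*} (u m s b : ℕ) (hs : 0 < s) (hb : m ≤ b * s)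
    (C : Finset ι) (S : ι → Finset ℕ) (hne : ∀ x ∈ C, (S x).Nonempty)
    (hS : ∀ x ∈ C, S x ⊆ Finset.Ico u (u + m)) (hF : ¬ Form C S) :
    ∃ (G : Finset ι) (L : ℕ → Finset ι) (S' : ι → Finset ℕ),
      G ⊆ C ∧ (∀ j, L j ⊆ C) ∧
      (∀ j, ∀ x ∈ L j, S x ⊆ Finset.Ico (u + j * s) (u + j * s + min s (m - j * s))) ∧
      G.card + ∑ j ∈ Finset.range b, (L j).card = C.card ∧
      (∀ x ∈ G, (S' x).Nonempty) ∧ (∀ x ∈ G, S' x ⊆ Finset.range b) ∧ ¬ Form G S' ∧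
      ∑ x ∈ C, (S x).card ≤ ∑ j ∈ Finset.range b, ∑ x ∈ L j, (S x).card
        + 2 * G.card + 9 * m + ∑ x ∈ G, (S' x).card := by
  classical
  set blk : ℕ → ℕ := fun r => (r - u) / s with hblk
  have blk_lt : ∀ r a, u ≤ r → (blk r < a ↔ r < u + a * s) := by
    intro r a hr
    simp only [hblk]
    rw [Nat.div_lt_iff_lt_mul hs]
    omega
  have blk_le : ∀ r a, u ≤ r → (a ≤ blk r ↔ u + a * s ≤ r) := by
    intro r a hr
    rw [← not_lt, blk_lt r a hr, not_lt]
  have key : ∀ x, ∃ p : ℕ × ℕ, x ∈ C → (∀ r ∈ S x, p.1 ≤ blk r ∧ blk r ≤ p.2) ∧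
      (∃ r ∈ S x, blk r = p.1) ∧ (∃ r ∈ S x, blk r = p.2) := by
    intro x
    by_cases hx : x ∈ C
    · obtain ⟨r1, h1, h1'⟩ := Finset.exists_min_image (S x) blk (hne x hx)
      obtain ⟨r2, h2, h2'⟩ := Finset.exists_max_image (S x) blk (hne x hx)
      exact ⟨(blk r1, blk r2), fun _ => ⟨fun r hr => ⟨h1' r hr, h2' r hr⟩, ⟨r1, h1, rfl⟩,
        ⟨r2, h2, rfl⟩⟩⟩
    · exact ⟨(0, 0), fun h => absurd h hx⟩
  choose p hp using key
  have hlow : ∀ x ∈ C, ∀ r ∈ S x, u ≤ r := fun x hx r hr => (Finset.mem_Ico.1 (hS x hx hr)).1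
  have hhigh : ∀ x ∈ C, ∀ r ∈ S x, r < u + m := fun x hx r hr => (Finset.mem_Ico.1 (hS x hx hr)).2
  have hblkb : ∀ x ∈ C, ∀ r ∈ S x, blk r < b := by
    intro x hx r hr
    rw [blk_lt r b (hlow x hx r hr)]
    have := hhigh x hx r hr
    omega
  set G : Finset ι := C.filter (fun x => (p x).1 ≠ (p x).2) with hG
  set L : ℕ → Finset ι := fun j => C.filter (fun x => (p x).1 = (p x).2 ∧ (p x).1 = j) with hL
  set S' : ι → Finset ℕ := fun x => (S x).image blk with hS'
  have hGC : G ⊆ C := Finset.filter_subset _ _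
  have hLsum : ∀ φ : ι → ℕ, ∑ j ∈ Finset.range b, ∑ x ∈ L j, φ x
      = ∑ x ∈ C.filter (fun x => (p x).1 = (p x).2), φ x := by
    intro φ
    rw [← Finset.sum_fiberwise_of_maps_to (s := C.filter (fun x => (p x).1 = (p x).2))
      (t := Finset.range b) (g := fun x => (p x).1)]
    · refine Finset.sum_congr rfl fun j _ => ?_
      simp only [hL, Finset.filter_filter]
    · intro x hx
      have hxC := (Finset.mem_filter.1 hx).1
      obtain ⟨r, hr, hr'⟩ := (hp x hxC).2.1
      simp only [Finset.mem_range]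
      rw [← hr']
      exact hblkb x hxC r hr
  have hsplit : ∀ φ : ι → ℕ, ∑ x ∈ C, φ x
      = ∑ j ∈ Finset.range b, ∑ x ∈ L j, φ x + ∑ x ∈ G, φ x := by
    intro φ
    rw [hLsum, hG, Finset.sum_filter_add_sum_filter_not]
  refine ⟨G, L, S', hGC, fun j => Finset.filter_subset _ _, ?_, ?_, ?_, ?_, ?_, ?_⟩
  · intro j x hx r hr
    obtain ⟨hxC, h1, h2⟩ := Finset.mem_filter.1 hx
    have h3 := (hp x hxC).1 r hr
    have h4 := (blk_le r j (hlow x hxC r hr)).1 (by omega)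
    have h5 := (blk_lt r (j + 1) (hlow x hxC r hr)).1 (by omega)
    have h6 := hhigh x hxC r hr
    rw [Finset.mem_Ico]
    rw [Nat.succ_mul] at h5
    omega
  · have := hsplit (fun _ => 1)
    simp only [Finset.sum_const, smul_eq_mul, mul_one] at this
    omega
  · intro x hx
    exact (hne x (hGC hx)).image _
  · intro x hx r hr
    obtain ⟨r', h1, rfl⟩ := Finset.mem_image.1 hr
    exact Finset.mem_range.2 (hblkb x (hGC hx) r' h1)
  · rintro ⟨T, hT, hc, a, b', c, h⟩
    refine hF ⟨T, hT.trans hGC, hc, u + a * s, u + b' * s, u + c * s, fun x hx => ?_⟩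
    have hxC := hGC (hT hx)
    obtain ⟨⟨q1, m1, h1⟩, ⟨q2, m2, h2, h2'⟩, ⟨q3, m3, h3, h3'⟩, ⟨q4, m4, h4⟩⟩ := h x hx
    obtain ⟨r1, n1, rfl⟩ := Finset.mem_image.1 m1
    obtain ⟨r2, n2, rfl⟩ := Finset.mem_image.1 m2
    obtain ⟨r3, n3, rfl⟩ := Finset.mem_image.1 m3
    obtain ⟨r4, n4, rfl⟩ := Finset.mem_image.1 m4
    have l := hlow x hxC
    exact ⟨⟨r1, n1, (blk_lt _ _ (l _ n1)).1 h1⟩,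
      ⟨r2, n2, (blk_le _ _ (l _ n2)).1 h2, (blk_lt _ _ (l _ n2)).1 h2'⟩,
      ⟨r3, n3, (blk_le _ _ (l _ n3)).1 h3, (blk_lt _ _ (l _ n3)).1 h3'⟩,
      ⟨r4, n4, (blk_le _ _ (l _ n4)).1 h4⟩⟩
  · rw [hsplit]
    set lowr : ι → ℕ → Prop := fun x r => ∃ r' ∈ S x, r' < r ∧ blk r' = blk r with hlowr
    set upr : ι → ℕ → Prop := fun x r => ∃ r' ∈ S x, r < r' ∧ blk r' = blk r with hupr
    set CF : ι → Finset ℕ := fun x =>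
      (S x).filter (fun r => blk r = (p x).1 ∧ lowr x r ∧ upr x r) with hCF
    set CL : ι → Finset ℕ := fun x =>
      (S x).filter (fun r => blk r = (p x).2 ∧ lowr x r ∧ upr x r) with hCL
    set CM : ι → Finset ℕ := fun x =>
      (S x).filter (fun r => (p x).1 < blk r ∧ blk r < (p x).2 ∧ lowr x r) with hCM
    have hlt : ∀ x ∈ G, (p x).1 < (p x).2 := by
      intro x hx
      obtain ⟨hxC, hxn⟩ := Finset.mem_filter.1 hx
      obtain ⟨r, hr, _⟩ := (hp x hxC).2.1
      have := (hp x hxC).1 r hr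
      omega
    have bF : ∑ x ∈ G, (CF x).card ≤ 3 * m := by
      refine double_count G CF u m
        (fun x hx => (Finset.filter_subset _ _).trans (hS x (hGC hx))) ?_
      intro r T hT hc h
      refine hF ⟨T, hT.trans hGC, hc, r, r + 1, u + (blk r + 1) * s, fun x hx => ?_⟩
      have hxC := hGC (hT hx)
      obtain ⟨hr, h1, ⟨r1, m1, h2, h3⟩, ⟨r2, m2, h4, h5⟩⟩ := Finset.mem_filter.1 (h x hx)
      obtain ⟨r4, m4, h6⟩ := (hp x hxC).2.2
      have h7 := hlt x (hT hx)
      have l := hlow x hxC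
      exact ⟨⟨r1, m1, h2⟩, ⟨r, hr, le_rfl, by omega⟩,
        ⟨r2, m2, h4, (blk_lt _ _ (l _ m2)).1 (by omega)⟩,
        ⟨r4, m4, (blk_le _ _ (l _ m4)).1 (by omega)⟩⟩
    have bL : ∑ x ∈ G, (CL x).card ≤ 3 * m := by
      refine double_count G CL u m
        (fun x hx => (Finset.filter_subset _ _).trans (hS x (hGC hx))) ?_
      intro r T hT hc h
      refine hF ⟨T, hT.trans hGC, hc, u + blk r * s, r, r + 1, fun x hx => ?_⟩
      have hxC := hGC (hT hx)
      obtain ⟨hr, h1, ⟨r1, m1, h2, h3⟩, ⟨r2, m2, h4, h5⟩⟩ := Finset.mem_filter.1 (h x hx)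
      obtain ⟨r4, m4, h6⟩ := (hp x hxC).2.1
      have h7 := hlt x (hT hx)
      have l := hlow x hxC
      exact ⟨⟨r4, m4, (blk_lt _ _ (l _ m4)).1 (by omega)⟩,
        ⟨r1, m1, (blk_le _ _ (l _ m1)).1 (by omega), h2⟩, ⟨r, hr, le_rfl, by omega⟩,
        ⟨r2, m2, h4⟩⟩
    have bM : ∑ x ∈ G, (CM x).card ≤ 3 * m := by
      refine double_count G CM u m
        (fun x hx => (Finset.filter_subset _ _).trans (hS x (hGC hx))) ?_
      intro r T hT hc h
      refine hF ⟨T, hT.trans hGC, hc, u + blk r * s, r, u + (blk r + 1) * s, fun x hx => ?_⟩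
      have hxC := hGC (hT hx)
      obtain ⟨hr, h1, h1', ⟨r1, m1, h2, h3⟩⟩ := Finset.mem_filter.1 (h x hx)
      obtain ⟨r4, m4, h6⟩ := (hp x hxC).2.1
      obtain ⟨r5, m5, h8⟩ := (hp x hxC).2.2
      have l := hlow x hxC
      exact ⟨⟨r4, m4, (blk_lt _ _ (l _ m4)).1 (by omega)⟩,
        ⟨r1, m1, (blk_le _ _ (l _ m1)).1 (by omega), h2⟩,
        ⟨r, hr, le_rfl, (blk_lt _ _ (l _ hr)).1 (by omega)⟩,
        ⟨r5, m5, (blk_le _ _ (l _ m5)).1 (by omega)⟩⟩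
    have each : ∀ x ∈ G, (S x).card ≤
        (S' x).card + 2 + ((CF x).card + (CL x).card + (CM x).card) := by
      intro x hx
      have hxC := hGC hx
      set MN := (S x).filter (fun r => ¬ lowr x r) with hMN
      set TF := (S x).filter (fun r => blk r = (p x).1 ∧ ¬ upr x r) with hTF
      set TL := (S x).filter (fun r => blk r = (p x).2 ∧ ¬ upr x r) with hTL
      have cMN : MN.card ≤ (S' x).card := by
        refine Finset.card_le_card_of_injOn blk ?_ ?_
        · intro r hr
          exact Finset.mem_coe.2 (Finset.mem_image_of_mem _ (Finset.mem_filter.1 hr).1)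
        · intro r hr r' hr' hrr
          obtain ⟨a1, a2⟩ := Finset.mem_filter.1 hr
          obtain ⟨b1, b2⟩ := Finset.mem_filter.1 hr'
          rcases lt_trichotomy r r' with h | h | h
          · exact absurd ⟨r, a1, h, hrr⟩ b2
          · exact h
          · exact absurd ⟨r', b1, h, hrr.symm⟩ a2
      have top : ∀ j, ((S x).filter (fun r => blk r = j ∧ ¬ upr x r)).card ≤ 1 := by
        intro j
        rw [Finset.card_le_one]
        intro r hr r' hr'
        obtain ⟨a1, a2, a3⟩ := Finset.mem_filter.1 hr
        obtain ⟨b1, b2, b3⟩ := Finset.mem_filter.1 hr'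
        rcases lt_trichotomy r r' with h | h | h
        · exact absurd ⟨r', b1, h, by omega⟩ a3
        · exact h
        · exact absurd ⟨r, a1, h, by omega⟩ b3
      have cover : S x ⊆ MN ∪ (TF ∪ (TL ∪ (CF x ∪ (CL x ∪ CM x)))) := by
        intro r hr
        have h := (hp x hxC).1 r hr
        simp only [Finset.mem_union, hMN, hTF, hTL, hCF, hCL, hCM, Finset.mem_filter, hr, true_and]
        by_cases q1 : lowr x r
        · by_cases q2 : upr x r
          · rcases Nat.lt_or_ge (p x).1 (blk r) with h1 | h1
            · rcases Nat.lt_or_ge (blk r) (p x).2 with h2 | h2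
              · exact Or.inr (Or.inr (Or.inr (Or.inr (Or.inr ⟨h1, h2, q1⟩))))
              · exact Or.inr (Or.inr (Or.inr (Or.inr (Or.inl ⟨by omega, q1, q2⟩))))
            · exact Or.inr (Or.inr (Or.inr (Or.inl ⟨by omega, q1, q2⟩)))
          · rcases Nat.lt_or_ge (p x).1 (blk r) with h1 | h1
            · rcases Nat.lt_or_ge (blk r) (p x).2 with h2 | h2
              · exact Or.inr (Or.inr (Or.inr (Or.inr (Or.inr ⟨h1, h2, q1⟩))))
              · exact Or.inr (Or.inr (Or.inl ⟨by omega, q2⟩))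
            · exact Or.inr (Or.inl ⟨by omega, q2⟩)
        · exact Or.inl q1
      have e1 := Finset.card_le_card cover
      have e2 := Finset.card_union_le MN (TF ∪ (TL ∪ (CF x ∪ (CL x ∪ CM x))))
      have e3 := Finset.card_union_le TF (TL ∪ (CF x ∪ (CL x ∪ CM x)))
      have e4 := Finset.card_union_le TL (CF x ∪ (CL x ∪ CM x))
      have e5 := Finset.card_union_le (CF x) (CL x ∪ CM x)
      have e6 := Finset.card_union_le (CL x) (CM x)
      have e7 : TF.card ≤ 1 := top _
      have e8 : TL.card ≤ 1 := top _
      omega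
    have tot := Finset.sum_le_sum each
    simp only [Finset.sum_add_distrib, Finset.sum_const, smul_eq_mul] at tot
    omega

lemma sum_min_le (s m b : ℕ) : ∑ j ∈ Finset.range b, min s (m - j * s) ≤ m := by
  have : ∑ j ∈ Finset.range b, min s (m - j * s) = min (b * s) m := by
    induction b with
    | zero => simp
    | succ b ih => rw [Finset.sum_range_succ, ih, Nat.succ_mul]; omega
  rw [this]
  exact min_le_right _ _

lemma Form.mono {ι : Type*} {C C' : Finset ι} {S : ι → Finset ℕ} (h : C' ⊆ C)
    (hF : ¬ Form C S) : ¬ Form C' S := by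
  rintro ⟨T, hT, hr⟩
  exact hF ⟨T, hT.trans h, hr⟩

lemma trivial_bound {ι : Type*} (u m : ℕ) (C : Finset ι) (S : ι → Finset ℕ)
    (hS : ∀ x ∈ C, S x ⊆ Finset.Ico u (u + m)) : ∑ x ∈ C, (S x).card ≤ m * C.card := by
  have : ∀ x ∈ C, (S x).card ≤ m := fun x hx => by
    simpa using Finset.card_le_card (hS x hx)
  refine (Finset.sum_le_sum this).trans ?_
  simp [mul_comm]

lemma claim_two {ι : Type*} : ∀ (m u : ℕ) (C : Finset ι) (S : ι → Finset ℕ),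
    (∀ x ∈ C, (S x).Nonempty) → (∀ x ∈ C, S x ⊆ Finset.Ico u (u + m)) → ¬ Form C S →
    ∑ x ∈ C, (S x).card ≤ 4 * C.card + 9 * (m * alphaHier 2 m) := by
  intro m
  induction m using Nat.strong_induction_on with
  | _ m ih =>
    intro u C S hne hS hF
    by_cases hm : m ≤ 1
    · have := trivial_bound u m C S hS
      nlinarith
    · set s := (m + 1) / 2 with hs
      obtain ⟨G, L, S', hG, hL, hLS, hcard, hne', hS', hF', htot⟩ :=
        recursion u m s 2 (by omega) (by omega) C S hne hS hF
      have h1 : ∑ x ∈ G, (S' x).card ≤ 2 * G.card := by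
        refine trivial_bound 0 2 G S' fun x hx => ?_
        intro r hr
        have := Finset.mem_range.1 (hS' x hx hr)
        simp; omega
      have hα : alphaHier 2 m = 1 + alphaHier 2 s := by
        have := alpha_step 0 m (by omega)
        simp only [Nat.zero_add] at this
        rw [this]
        simp only [alphaHier, hs]
      have h2 : ∀ j ∈ Finset.range 2, ∑ x ∈ L j, (S x).card ≤
          4 * (L j).card + 9 * (min s (m - j * s) * alphaHier 2 s) := by
        intro j _
        refine (ih (min s (m - j * s)) (by omega) (u + j * s) (L j) S
          (fun x hx => hne x (hL j hx)) (hLS j) (Form.mono (hL j) hF)).trans ?_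
        have := alpha_mono 1 (min s (m - j * s)) s (min_le_left _ _)
        gcongr
      have h3 := Finset.sum_le_sum h2
      rw [Finset.sum_add_distrib, ← Finset.mul_sum, ← Finset.mul_sum, ← Finset.sum_mul] at h3
      have h4 := Nat.mul_le_mul_right (alphaHier 2 s) (sum_min_le s m 2)
      rw [hα, mul_add]
      omega

lemma claim {ι : Type*} (d : ℕ) : ∀ (m u : ℕ) (C : Finset ι) (S : ι → Finset ℕ),
    (∀ x ∈ C, (S x).Nonempty) → (∀ x ∈ C, S x ⊆ Finset.Ico u (u + m)) → ¬ Form C S →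
    ∑ x ∈ C, (S x).card ≤
      8 * (d + 2) ^ 2 * C.card + 18 * (d + 2) * (m * alphaHier (d + 2) m) := by
  induction d with
  | zero =>
    intro m u C S hne hS hF
    have := claim_two m u C S hne hS hF
    simp only [Nat.zero_add]
    nlinarith [Nat.zero_le (m * alphaHier 2 m)]
  | succ d ihd =>
    intro m
    induction m using Nat.strong_induction_on with
    | _ m ih =>
      intro u C S hne hS hF
      by_cases hm : m < 8 * (d + 1 + 2) ^ 2
      · have h1 := trivial_bound u m C S hS
        have h2 := Nat.mul_le_mul_right C.card hm.le
        omega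
      · push Not at hm
        have hm2 : 2 ≤ m := by
          have : 0 < (d + 1 + 2) ^ 2 := by positivity
          omega
        set s := alphaHier (d + 2) m with hs
        have hs1 : 1 ≤ s := alpha_pos d m hm2
        have hsm : s < m := alpha_lt (d + 1) m hm2
        have hs2 : s * s ≤ 2 * m :=
          (Nat.mul_le_mul (alpha_le_two d m) (alpha_le_two d m)).trans (alpha_two_sq m)
        have hK : 2 * (d + 1 + 2) * s ≤ m := by
          by_contra hc
          push Not at hc
          have h1 : m * m < (2 * (d + 1 + 2) * s) * (2 * (d + 1 + 2) * s) :=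
            Nat.mul_lt_mul'' hc hc
          have h2 : 4 * (d + 1 + 2) ^ 2 * (s * s) ≤ 4 * (d + 1 + 2) ^ 2 * (2 * m) :=
            Nat.mul_le_mul_left _ hs2
          have h3 : 8 * (d + 1 + 2) ^ 2 * m ≤ m * m := Nat.mul_le_mul_right _ hm
          nlinarith
        set b := (m + s - 1) / s with hb
        have hbs : b * s ≤ m + s := by
          have := Nat.div_mul_le_self (m + s - 1) s
          rw [← hb] at this
          omega
        have hbm : m ≤ b * s := by
          have := Nat.lt_div_mul_add (a := m + s - 1) (b := s) (by omega)
          rw [← hb] at this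
          omega
        have hbm' : b ≤ m := by
          rw [hb]
          refine Nat.div_le_of_le_mul ?_
          have : (s - 1) * 1 ≤ (s - 1) * m := Nat.mul_le_mul_left _ (by omega)
          obtain ⟨s', hs'⟩ : ∃ s', s = s' + 1 := ⟨s - 1, by omega⟩
          rw [hs'] at this ⊢
          simp only [Nat.add_sub_cancel] at this
          rw [Nat.succ_mul]
          omega
        obtain ⟨G, L, S', hG, hL, hLS, hcard, hne', hS', hF', htot⟩ :=
          recursion u m s b (by omega) hbm C S hne hS hF
        have h1 : ∑ x ∈ G, (S' x).card ≤
            8 * (d + 2) ^ 2 * G.card + 18 * (d + 2) * (m + s) := by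
          refine (ihd b 0 G S' hne' ?_ hF').trans ?_
          · intro x hx r hr
            have := Finset.mem_range.1 (hS' x hx hr)
            simp; omega
          · have : b * alphaHier (d + 2) b ≤ m + s :=
              (Nat.mul_le_mul_left b (alpha_mono (d + 1) b m hbm')).trans hbs
            gcongr
        have hα : alphaHier (d + 1 + 2) m = 1 + alphaHier (d + 1 + 2) s := by
          have := alpha_step (d + 1) m hm2
          rw [this]
        have h2 : ∀ j ∈ Finset.range b, ∑ x ∈ L j, (S x).card ≤
            8 * (d + 1 + 2) ^ 2 * (L j).card
              + 18 * (d + 1 + 2) * (min s (m - j * s) * alphaHier (d + 1 + 2) s) := by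
          intro j _
          refine (ih (min s (m - j * s)) (by omega) (u + j * s) (L j) S
            (fun x hx => hne x (hL j hx)) (hLS j) (Form.mono (hL j) hF)).trans ?_
          have := alpha_mono (d + 2) (min s (m - j * s)) s (min_le_left _ _)
          gcongr
        have h3 := Finset.sum_le_sum h2
        rw [Finset.sum_add_distrib, ← Finset.mul_sum, ← Finset.mul_sum, ← Finset.sum_mul] at h3
        have h4 := Nat.mul_le_mul_left (18 * (d + 1 + 2))
          (Nat.mul_le_mul_right (alphaHier (d + 1 + 2) s) (sum_min_le s m b))
        rw [hα, ← hcard]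
        generalize alphaHier (d + 1 + 2) s = A at *
        generalize ∑ j ∈ Finset.range b, (L j).card = Lc at *
        generalize ∑ j ∈ Finset.range b, min s (m - j * s) = Sm at *
        nlinarith


/-! ## Families of functions -/

/-- The family `P` of functions order-shatters no four-tuple of distinct elements of `A`. -/
def NS {ι : Type*} (A : Finset ι) (P : Finset (ι → ℕ)) : Prop :=
  ∀ e : Fin 4 → ι, Function.Injective e → (∀ i, e i ∈ A) →
    ¬ ∀ σ : Equiv.Perm (Fin 4), ∃ f ∈ P, ∀ i j, σ i < σ j → f (e i) < f (e j)

/-- `P` realizes every selection from the matrix `S`. -/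
def Realizes {ι : Type*} (P : Finset (ι → ℕ)) (S : ι → Finset ℕ) : Prop :=
  ∀ h : ι → ℕ, (∀ x, (S x).Nonempty → h x ∈ S x) →
    ∃ f ∈ P, ∀ x, (S x).Nonempty → f x = h x

lemma choose_ineq (e D : ℕ) (hD : 1 ≤ D) : e ≤ D * (1 + e.choose D) := by
  by_cases h : e < D
  · nlinarith [Nat.zero_le (e.choose D)]
  · push Not at h
    obtain ⟨k, rfl⟩ := Nat.exists_eq_add_of_le h
    have h1 : k + 1 ≤ (D + k).choose D := by
      induction k with
      | zero => simp
      | succ k ih =>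
        obtain ⟨D', rfl⟩ : ∃ D', D = D' + 1 := ⟨D - 1, by omega⟩
        rw [← Nat.add_assoc, Nat.choose_succ_succ']
        have := ih (by omega)
        have : 0 < (D' + 1 + k).choose D' := Nat.choose_pos (by omega)
        omega
    nlinarith

lemma sauer {ι : Type*} (D : ℕ) (hD : 1 ≤ D) (A : Finset ι) :
    ∀ P : Finset (ι → ℕ), (∀ f ∈ P, ∀ x, x ∉ A → f x = 0) →
    ∃ 𝒮 : Finset (ι → Finset ℕ), P.card ≤ D ^ A.card * 𝒮.card ∧
      ∀ S ∈ 𝒮, (∀ x, x ∉ A → S x = ∅) ∧ (∀ x, S x = ∅ ∨ (S x).card = D) ∧ Realizes P S := by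
  classical
  induction A using Finset.induction_on with
  | empty =>
    intro P hP
    by_cases hne : P.Nonempty
    · refine ⟨{fun _ => ∅}, ?_, ?_⟩
      · simp only [Finset.card_empty, pow_zero, Finset.card_singleton, mul_one]
        rw [Finset.card_le_one]
        intro f hf g hg
        funext x
        rw [hP f hf x (by simp), hP g hg x (by simp)]
      · intro S hS
        rw [Finset.mem_singleton] at hS
        subst hS
        obtain ⟨f, hf⟩ := hne
        exact ⟨fun _ _ => rfl, fun _ => Or.inl rfl, fun h _ => ⟨f, hf, fun x hx => by simp at hx⟩⟩
    · rw [Finset.not_nonempty_iff_eq_empty] at hne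
      subst hne
      exact ⟨∅, by simp, by simp⟩
  | insert c A hc ih =>
    intro P hP
    set Q : ℕ → Finset (ι → ℕ) := fun v =>
      (P.filter (fun f => f c = v)).image (fun f => Function.update f c 0) with hQ
    have hQ0 : ∀ v, ∀ f ∈ Q v, ∀ x, x ∉ A → f x = 0 := by
      intro v f hf x hx
      obtain ⟨g, hg, rfl⟩ := Finset.mem_image.1 hf
      by_cases hxc : x = c
      · subst hxc; simp
      · simp only [Function.update_of_ne hxc]
        exact hP g (Finset.mem_filter.1 hg).1 x (by simp [hxc, hx])
    have hQc : ∀ v, (Q v).card = (P.filter (fun f => f c = v)).card := by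
      intro v
      refine Finset.card_image_of_injOn ?_
      intro f hf g hg hfg
      have h1 := (Finset.mem_filter.1 hf).2
      have h2 := (Finset.mem_filter.1 hg).2
      funext x
      by_cases hxc : x = c
      · subst hxc; rw [h1, h2]
      · have := congrFun hfg x
        simpa [Function.update_of_ne hxc] using this
    choose 𝒯 h𝒯c h𝒯 using fun v => ih (Q v) (hQ0 v)
    set V : Finset ℕ := P.image (fun f => f c) with hV
    set U : Finset (ι → Finset ℕ) := V.biUnion 𝒯 with hU
    set E : (ι → Finset ℕ) → Finset ℕ := fun S => V.filter (fun v => S ∈ 𝒯 v) with hE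
    set X : (ι → Finset ℕ) → Finset (Finset ℕ) := fun S =>
      insert ∅ ((E S).powersetCard D) with hX
    set W : Finset (Σ _ : ι → Finset ℕ, Finset ℕ) := U.sigma X with hW
    set φ : (Σ _ : ι → Finset ℕ, Finset ℕ) → (ι → Finset ℕ) :=
      fun w => Function.update w.1 c w.2 with hφ
    have hUc : ∀ S ∈ U, S c = ∅ := by
      intro S hS
      obtain ⟨v, _, hv⟩ := Finset.mem_biUnion.1 hS
      exact (h𝒯 v S hv).1 c hc
    have hXc : ∀ S, (X S).card = 1 + (E S).card.choose D := by
      intro S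
      rw [hX, Finset.card_insert_of_notMem, Finset.card_powersetCard, add_comm]
      intro h
      have := (Finset.mem_powersetCard.1 h).2
      simp at this
      omega
    have hinj : Set.InjOn φ W := by
      rintro ⟨S, Y⟩ hw ⟨S', Y'⟩ hw' h
      have h1 := hUc S (Finset.mem_sigma.1 hw).1
      have h2 := hUc S' (Finset.mem_sigma.1 hw').1
      have hY : Y = Y' := by
        have := congrFun h c
        simpa [hφ] using this
      have hS : S = S' := by
        funext x
        by_cases hxc : x = c
        · subst hxc; rw [h1, h2]
        · have := congrFun h x
          simpa [hφ, Function.update_of_ne hxc] using this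
      subst hY; subst hS; rfl
    refine ⟨W.image φ, ?_, ?_⟩
    · rw [Finset.card_image_of_injOn hinj, hW, Finset.card_sigma]
      have e1 : P.card = ∑ v ∈ V, (P.filter (fun f => f c = v)).card :=
        Finset.card_eq_sum_card_image (fun f : ι → ℕ => f c) P
      have e2 : ∑ v ∈ V, (𝒯 v).card = ∑ S ∈ U, (E S).card := by
        have : ∀ v ∈ V, (𝒯 v).card = ∑ S ∈ U, if S ∈ 𝒯 v then 1 else 0 := by
          intro v hv
          rw [← Finset.sum_filter, ← Finset.card_eq_sum_ones]
          congr 1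
          ext S
          simp only [Finset.mem_filter]
          exact ⟨fun h => ⟨Finset.mem_biUnion.2 ⟨v, hv, h⟩, h⟩, fun h => h.2⟩
        rw [Finset.sum_congr rfl this, Finset.sum_comm]
        refine Finset.sum_congr rfl fun S _ => ?_
        rw [← Finset.sum_filter, ← Finset.card_eq_sum_ones]
      have e3 : P.card ≤ D ^ A.card * ∑ S ∈ U, (E S).card := by
        rw [e1, ← e2, Finset.mul_sum]
        refine Finset.sum_le_sum fun v _ => ?_
        rw [← hQc]
        exact h𝒯c v
      have e4 : ∑ S ∈ U, (E S).card ≤ D * ∑ S ∈ U, (X S).card := by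
        rw [Finset.mul_sum]
        refine Finset.sum_le_sum fun S _ => ?_
        rw [hXc]
        exact choose_ineq _ D hD
      rw [Finset.card_insert_of_notMem hc, pow_succ, mul_assoc]
      exact e3.trans (Nat.mul_le_mul_left _ e4)
    · intro S hS
      obtain ⟨⟨S, Y⟩, hw, rfl⟩ := Finset.mem_image.1 hS
      obtain ⟨hSU, hYX⟩ := Finset.mem_sigma.1 hw
      simp only at hSU hYX
      obtain ⟨v₀, hv₀, hSv₀⟩ := Finset.mem_biUnion.1 hSU
      have hSc := hUc S hSU
      refine ⟨?_, ?_, ?_⟩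
      · intro x hx
        rw [Finset.mem_insert, not_or] at hx
        simp only [hφ, Function.update_of_ne hx.1]
        exact (h𝒯 v₀ S hSv₀).1 x hx.2
      · intro x
        by_cases hxc : x = c
        · subst hxc
          simp only [hφ, Function.update_self]
          rcases Finset.mem_insert.1 hYX with h | h
          · exact Or.inl h
          · exact Or.inr (Finset.mem_powersetCard.1 h).2
        · simp only [hφ, Function.update_of_ne hxc]
          exact (h𝒯 v₀ S hSv₀).2.1 x
      · intro h hh
        have main : ∀ v, S ∈ 𝒯 v → ∃ f ∈ P, f c = v ∧ ∀ x, (S x).Nonempty → f x = h x := by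
          intro v hv
          obtain ⟨f, hf, hfh⟩ := (h𝒯 v S hv).2.2 h (by
            intro x hx
            have hxc : x ≠ c := by
              rintro rfl
              rw [hSc] at hx
              simp at hx
            have := hh x
            simp only [hφ, Function.update_of_ne hxc] at this
            exact this hx)
          obtain ⟨g, hg, rfl⟩ := Finset.mem_image.1 hf
          obtain ⟨hg1, hg2⟩ := Finset.mem_filter.1 hg
          refine ⟨g, hg1, hg2, fun x hx => ?_⟩
          have hxc : x ≠ c := by
            rintro rfl
            rw [hSc] at hx
            simp at hx
          have := hfh x hx
          simpa [Function.update_of_ne hxc] using this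
        rcases Finset.mem_insert.1 hYX with hY | hY
        · subst hY
          obtain ⟨f, hf, _, hf2⟩ := main v₀ hSv₀
          refine ⟨f, hf, fun x hx => ?_⟩
          by_cases hxc : x = c
          · subst hxc; simp [hφ] at hx
          · simp only [hφ, Function.update_of_ne hxc] at hx
            exact hf2 x hx
        · have hYE := (Finset.mem_powersetCard.1 hY).1
          have hYD := (Finset.mem_powersetCard.1 hY).2
          have hYn : Y.Nonempty := Finset.card_pos.1 (by omega)
          have hc1 : h c ∈ Y := by
            have := hh c
            simp only [hφ, Function.update_self] at this
            exact this hYn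
          obtain ⟨f, hf, hf1, hf2⟩ := main (h c) (Finset.mem_filter.1 (hYE hc1)).2
          refine ⟨f, hf, fun x hx => ?_⟩
          by_cases hxc : x = c
          · subst hxc; exact hf1
          · simp only [hφ, Function.update_of_ne hxc] at hx
            exact hf2 x hx

lemma not_form_of_realizes {ι : Type*} (A : Finset ι) (P : Finset (ι → ℕ)) (hP : NS A P)
    (S : ι → Finset ℕ) (hS : Realizes P S) (B : Finset ι) (hB : B ⊆ A) : ¬ Form B S := by
  classical
  rintro ⟨T, hT, hc, a, b, c, h⟩
  set e : Fin 4 ≃ T := (Fintype.equivFinOfCardEq (by simp [hc])).symm with he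
  refine hP (fun i => (e i : ι)) (fun i j hij => e.injective (Subtype.ext hij))
    (fun i => hB (hT (e i).2)) ?_
  intro σ
  -- the interval with a given index
  have hsel : ∀ x ∈ T, ∀ i : Fin 4, ∃ r ∈ S x, (i = 0 → r < a) ∧ (i = 1 → a ≤ r ∧ r < b) ∧
      (i = 2 → b ≤ r ∧ r < c) ∧ (i = 3 → c ≤ r) := by
    intro x hx i
    obtain ⟨⟨q1, m1, h1⟩, ⟨q2, m2, h2, h2'⟩, ⟨q3, m3, h3, h3'⟩, ⟨q4, m4, h4⟩⟩ := h x hx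
    fin_cases i
    · exact ⟨q1, m1, by simp [h1]⟩
    · exact ⟨q2, m2, by simp [h2, h2']⟩
    · exact ⟨q3, m3, by simp [h3, h3']⟩
    · exact ⟨q4, m4, by simp [h4]⟩
  have hsel2 : ∀ x, ∃ r, ((S x).Nonempty → r ∈ S x) ∧ ∀ hx : x ∈ T,
      (σ (e.symm ⟨x, hx⟩) = 0 → r < a) ∧ (σ (e.symm ⟨x, hx⟩) = 1 → a ≤ r ∧ r < b) ∧
      (σ (e.symm ⟨x, hx⟩) = 2 → b ≤ r ∧ r < c) ∧ (σ (e.symm ⟨x, hx⟩) = 3 → c ≤ r) := by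
    intro x
    by_cases hx : x ∈ T
    · obtain ⟨r, hr, h'⟩ := hsel x hx (σ (e.symm ⟨x, hx⟩))
      exact ⟨r, fun _ => hr, fun _ => h'⟩
    · by_cases hn : (S x).Nonempty
      · obtain ⟨r, hr⟩ := hn
        exact ⟨r, fun _ => hr, fun h => absurd h hx⟩
      · exact ⟨0, fun h => absurd h hn, fun h => absurd h hx⟩
  choose g hg1 hg2 using hsel2
  obtain ⟨f, hf, hfg⟩ := hS g hg1
  refine ⟨f, hf, fun i j hij => ?_⟩
  have hn : ∀ i, (S (e i)).Nonempty := by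
    intro i
    obtain ⟨⟨q1, m1, h1⟩, _⟩ := h (e i) (e i).2
    exact ⟨q1, m1⟩
  rw [hfg _ (hn i), hfg _ (hn j)]
  have k1 := hg2 (e i) (e i).2
  have k2 := hg2 (e j) (e j).2
  simp only [Subtype.coe_eta, Equiv.symm_apply_apply] at k1 k2
  have habc : a < b ∧ b < c := by
    obtain ⟨⟨q1, m1, h1⟩, ⟨q2, m2, h2, h2'⟩, ⟨q3, m3, h3, h3'⟩, ⟨q4, m4, h4⟩⟩ :=
      h (e i) (e i).2
    omega
  generalize σ i = y at *
  generalize σ j = z at *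
  fin_cases y <;> fin_cases z <;> simp at hij k1 k2 <;> omega

lemma contract {ι : Type*} (A : Finset ι) (P : Finset (ι → ℕ)) (t : ℕ) (ht : 0 < t)
    (h0 : ∀ f ∈ P, ∀ x, x ∉ A → f x = 0) (hP : NS A P) :
    ∃ P' : Finset (ι → ℕ), P.card ≤ t ^ A.card * P'.card ∧ NS A P' ∧
      (∀ f ∈ P', ∀ x, x ∉ A → f x = 0) ∧ (∀ f ∈ P', ∃ g ∈ P, ∀ x, f x = g x / t) := by
  classical
  refine ⟨P.image (fun f x => f x / t), ?_, ?_, ?_, ?_⟩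
  · refine Finset.card_le_mul_card_image _ _ fun g _ => ?_
    have : ((Finset.univ : Finset (A → Fin t))).card = t ^ A.card := by simp
    rw [← this]
    refine Finset.card_le_card_of_injOn (fun f x => ⟨f x % t, Nat.mod_lt _ ht⟩)
      (fun _ _ => Finset.mem_coe.2 (Finset.mem_univ _)) ?_
    intro f hf f' hf' hff
    obtain ⟨h1, h2⟩ := Finset.mem_filter.1 hf
    obtain ⟨h1', h2'⟩ := Finset.mem_filter.1 hf'
    funext x
    by_cases hx : x ∈ A
    · have e1 : f x % t = f' x % t := by
        have := congrFun hff ⟨x, hx⟩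
        simpa using this
      have e2 : f x / t = f' x / t := congrFun (h2.trans h2'.symm) x
      rw [← Nat.div_add_mod (f x) t, ← Nat.div_add_mod (f' x) t, e1, e2]
    · rw [h0 f h1 x hx, h0 f' h1' x hx]
  · intro e he heA h
    refine hP e he heA fun σ => ?_
    obtain ⟨f, hf, hσ⟩ := h σ
    obtain ⟨g, hg, rfl⟩ := Finset.mem_image.1 hf
    exact ⟨g, hg, fun i j hij => Nat.lt_of_div_lt_div (hσ i j hij)⟩
  · intro f hf x hx
    obtain ⟨g, hg, rfl⟩ := Finset.mem_image.1 hf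
    simp [h0 g hg x hx]
  · intro f hf
    obtain ⟨g, hg, rfl⟩ := Finset.mem_image.1 hf
    exact ⟨g, hg, fun x => rfl⟩

lemma card_trivial {ι : Type*} (A : Finset ι) (P : Finset (ι → ℕ)) (m : ℕ)
    (h0 : ∀ f ∈ P, ∀ x, x ∉ A → f x = 0) (hm : ∀ f ∈ P, ∀ x ∈ A, f x < m) :
    P.card ≤ m ^ A.card := by
  classical
  by_cases hm0 : m = 0
  · subst hm0
    by_cases hA : A = ∅
    · subst hA
      simp only [Finset.card_empty, pow_zero]
      rw [Finset.card_le_one]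
      intro f hf g hg
      funext x
      rw [h0 f hf x (by simp), h0 g hg x (by simp)]
    · obtain ⟨x, hx⟩ := Finset.nonempty_iff_ne_empty.2 hA
      have : P = ∅ := Finset.eq_empty_of_forall_notMem fun f hf => by
        have := hm f hf x hx
        omega
      simp [this]
  · have : ((Finset.univ : Finset (A → Fin m))).card = m ^ A.card := by simp
    rw [← this]
    refine Finset.card_le_card_of_injOn (fun f x => ⟨f x % m, Nat.mod_lt _ (by omega)⟩)
      (fun _ _ => Finset.mem_coe.2 (Finset.mem_univ _)) ?_
    intro f hf f' hf' hff
    funext x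
    by_cases hx : x ∈ A
    · have := congrFun hff ⟨x, hx⟩
      simp only [Fin.mk.injEq] at this
      rwa [Nat.mod_eq_of_lt (hm f hf x hx), Nat.mod_eq_of_lt (hm f' hf' x hx)] at this
    · rw [h0 f hf x hx, h0 f' hf' x hx]

/-- The number of realized matrices with a given support `B`. -/
lemma count_support {ι : Type*} (A B : Finset ι) (hBA : B ⊆ A) (P : Finset (ι → ℕ)) (D m : ℕ)
    (hP : NS A P) (hm : ∀ f ∈ P, ∀ x ∈ A, f x < m) (𝒮 : Finset (ι → Finset ℕ))
    (h𝒮 : ∀ S ∈ 𝒮, (∀ x ∈ B, (S x).card = D) ∧ (∀ x, x ∉ B → S x = ∅) ∧ Realizes P S)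
    (hD : 1 ≤ D) (R : ℕ)
    (hR : ∀ Q : Finset (ι → ℕ), (∀ f ∈ Q, ∀ x, x ∉ B → f x = 0) → NS B Q →
      (∀ f ∈ Q, ∀ x ∈ B, f x < m) → Q.card ≤ R) :
    𝒮.card ≤ R ^ D := by
  classical
  have hen : ∀ X : Finset ℕ, ∃ en : ℕ → ℕ, X = (Finset.range X.card).image en := by
    intro X
    refine ⟨fun i => if h : i < X.card then X.orderEmbOfFin rfl ⟨i, h⟩ else 0, ?_⟩
    ext y
    simp only [Finset.mem_image, Finset.mem_range]
    constructor
    · intro hy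
      have : y ∈ Set.range (X.orderEmbOfFin rfl) := by
        rw [Finset.range_orderEmbOfFin]; exact hy
      obtain ⟨i, hi⟩ := this
      exact ⟨i, i.2, by simp [i.2, hi]⟩
    · rintro ⟨i, hi, rfl⟩
      simp only [hi, dif_pos]
      exact Finset.orderEmbOfFin_mem _ _ _
  choose en hen using hen
  set g : ℕ → (ι → Finset ℕ) → (ι → ℕ) := fun r S x => if x ∈ B then en (S x) r else 0 with hg
  have hgm : ∀ S ∈ 𝒮, ∀ r < D, ∀ x ∈ B, g r S x ∈ S x := by
    intro S hS r hr x hx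
    simp only [hg, hx, if_true]
    have h2 := (h𝒮 S hS).1 x hx
    have h3 := Finset.mem_image_of_mem (en (S x)) (Finset.mem_range.2 (show r < (S x).card by omega))
    exact (congrArg (fun X => en (S x) r ∈ X) (hen (S x))).mpr h3
  have hreal : ∀ S ∈ 𝒮, ∀ r < D, ∃ f ∈ P, ∀ x ∈ B, f x = g r S x := by
    intro S hS r hr
    have hne : ∀ x, (S x).Nonempty → x ∈ B := by
      intro x hx
      by_contra hxB
      rw [(h𝒮 S hS).2.1 x hxB] at hx
      simp at hx
    obtain ⟨f, hf, h⟩ := (h𝒮 S hS).2.2 (g r S) (fun x hx => hgm S hS r hr x (hne x hx))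
    exact ⟨f, hf, fun x hx => h x ⟨_, hgm S hS r hr x hx⟩⟩
  have hGr : ∀ r < D, (𝒮.image (g r)).card ≤ R := by
    intro r hr
    refine hR _ ?_ ?_ ?_
    · intro f hf x hx
      obtain ⟨S, _, rfl⟩ := Finset.mem_image.1 hf
      simp [hg, hx]
    · intro e he heB h
      refine hP e he (fun i => hBA (heB i)) fun σ => ?_
      obtain ⟨f, hf, hσ⟩ := h σ
      obtain ⟨S, hS, rfl⟩ := Finset.mem_image.1 hf
      obtain ⟨f', hf', hff⟩ := hreal S hS r hr
      refine ⟨f', hf', fun i j hij => ?_⟩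
      rw [hff _ (heB i), hff _ (heB j)]
      exact hσ i j hij
    · intro f hf x hx
      obtain ⟨S, hS, rfl⟩ := Finset.mem_image.1 hf
      obtain ⟨f', hf', hff⟩ := hreal S hS r hr
      rw [← hff x hx]
      exact hm f' hf' x (hBA hx)
  have hprod : 𝒮.card ≤ (Fintype.piFinset (fun r : Fin D => 𝒮.image (g r))).card := by
    refine Finset.card_le_card_of_injOn (fun S r => g r S) ?_ ?_
    · intro S hS
      rw [Finset.mem_coe, Fintype.mem_piFinset]
      exact fun r => Finset.mem_image_of_mem _ hS
    · intro S hS S' hS' h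
      funext x
      by_cases hx : x ∈ B
      · rw [hen (S x), hen (S' x), (h𝒮 S hS).1 x hx, (h𝒮 S' hS').1 x hx]
        refine Finset.image_congr fun r hr => ?_
        have hr' : r < D := by simpa using hr
        have := congrFun (congrFun h ⟨r, hr'⟩) x
        simpa [hg, hx] using this
      · rw [(h𝒮 S hS).2.1 x hx, (h𝒮 S' hS').2.1 x hx]
  refine hprod.trans ?_
  rw [Fintype.card_piFinset]
  refine (Finset.prod_le_prod' (s := Finset.univ) (f := fun r : Fin D => (𝒮.image (g r)).card)
    (g := fun _ => R) (fun r _ => hGr r r.2)).trans ?_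
  simp

/-! ## The main induction -/

lemma realizes_lt {ι : Type*} (A : Finset ι) (P : Finset (ι → ℕ)) (m : ℕ)
    (hm : ∀ f ∈ P, ∀ x ∈ A, f x < m) (S : ι → Finset ℕ) (hS : Realizes P S)
    (x : ι) (hx : x ∈ A) : S x ⊆ Finset.Ico 0 (0 + m) := by
  classical
  intro r hr
  obtain ⟨f, hf, h⟩ := hS
    (fun y => if y = x then r else if hy : (S y).Nonempty then hy.choose else 0) (by
      intro y hy
      by_cases hyx : y = x
      · subst hyx; simpa using hr
      · simp only [hyx, if_false, hy, dif_pos]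
        exact hy.choose_spec)
  have h1 := h x ⟨r, hr⟩
  simp only [if_true] at h1
  have h2 := hm f hf x hx
  rw [Finset.mem_Ico]
  omega

lemma small_count {ι : Type*} (B : Finset ι) (Q : Finset (ι → ℕ)) (m : ℕ) (K : ℝ)
    (h0 : ∀ f ∈ Q, ∀ x, x ∉ B → f x = 0) (hQ : NS B Q) (hm : ∀ f ∈ Q, ∀ x ∈ B, f x < m)
    (ih : ∀ Q : Finset (ι → ℕ), (∀ f ∈ Q, ∀ x, x ∉ B → f x = 0) → NS B Q →
      (∀ f ∈ Q, ∀ x ∈ B, f x < B.card) → (Q.card : ℝ) ≤ K ^ B.card) :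
    (Q.card : ℝ) ≤ Real.exp m * K ^ B.card := by
  by_cases ha : B.card = 0
  · have h1 := card_trivial B Q m h0 hm
    rw [ha] at h1 ⊢
    have h2 : (Q.card : ℝ) ≤ 1 := by exact_mod_cast (by simpa using h1)
    have h3 : (1 : ℝ) ≤ Real.exp m := Real.one_le_exp (by positivity)
    simpa using h2.trans h3
  · obtain ⟨Q', h1, h2, h3, h4⟩ := contract B Q (m / B.card + 1) (Nat.succ_pos _) h0 hQ
    have h5 := ih Q' h3 h2 (by
      intro f hf x hx
      obtain ⟨g, hg, hfg⟩ := h4 f hf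
      rw [hfg]
      refine Nat.div_lt_of_lt_mul ?_
      have := hm g hg x hx
      have h6 : m < B.card * (m / B.card + 1) := Nat.lt_mul_div_succ m (by omega)
      rw [mul_comm]
      omega)
    have h6 : (Q.card : ℝ) ≤ ((m / B.card + 1 : ℕ) : ℝ) ^ B.card * Q'.card := by
      exact_mod_cast h1
    have hapos : (0 : ℝ) < B.card := by exact_mod_cast Nat.pos_of_ne_zero ha
    have h7 : ((m / B.card + 1 : ℕ) : ℝ) ≤ Real.exp ((m : ℝ) / B.card) := by
      have := Real.add_one_le_exp ((m : ℝ) / B.card)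
      have h8 : ((m / B.card : ℕ) : ℝ) ≤ (m : ℝ) / B.card := Nat.cast_div_le
      push_cast at h8 ⊢
      linarith
    have h8 : ((m / B.card + 1 : ℕ) : ℝ) ^ B.card ≤ Real.exp m := by
      refine (pow_le_pow_left₀ (by positivity) h7 _).trans ?_
      rw [← Real.exp_nat_mul]
      refine le_of_eq ?_
      congr 1
      field_simp
    refine h6.trans ?_
    exact mul_le_mul h8 h5 (by positivity) (by positivity)

lemma main_ind {ι : Type*} (N k : ℕ) (hk : 3 ≤ k) (hN : alphaHier k N ≤ 3) (K : ℝ)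
    (hK1 : (k : ℝ) ^ 3 ≤ K)
    (hK : 32 * Real.exp 32 * (k : ℝ) ^ 4 * K ^ ((216 : ℝ) / k) ≤ K) :
    ∀ x : ℕ, x ≤ N → ∀ A : Finset ι, A.card = x → ∀ P : Finset (ι → ℕ),
      (∀ f ∈ P, ∀ y, y ∉ A → f y = 0) → NS A P → (∀ f ∈ P, ∀ y ∈ A, f y < x) →
      (P.card : ℝ) ≤ K ^ x := by
  classical
  have hk1 : (1 : ℝ) ≤ k := by exact_mod_cast (by omega : 1 ≤ k)
  have hKone : 1 ≤ K := le_trans (one_le_pow₀ hk1) hK1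
  have hKpos : 0 < K := by linarith
  intro x
  induction x using Nat.strong_induction_on with
  | _ x ih =>
  intro hxN A hA P h0 hP hlt
  by_cases hx : x ≤ k ^ 3
  · have h1 := card_trivial A P x h0 hlt
    rw [hA] at h1
    have h2 : (P.card : ℝ) ≤ (x : ℝ) ^ x := by exact_mod_cast h1
    refine h2.trans (pow_le_pow_left₀ (by positivity) ?_ _)
    refine le_trans ?_ hK1
    exact_mod_cast hx
  push Not at hx
  have hk2 : 9 ≤ k ^ 2 := by nlinarith
  have hk3 : k ^ 3 = k * k ^ 2 := by ring
  have hxk : k ^ 2 ≤ x := by nlinarith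
  obtain ⟨P', hc1, hP', h0', hv'⟩ := contract A P (k ^ 2) (by positivity) h0 hP
  rw [hA] at hc1
  set m := x / k ^ 2 + 1 with hm
  have hmx : m * k ^ 2 ≤ 2 * x := by
    have := Nat.div_mul_le_self x (k ^ 2)
    rw [hm, add_mul]
    omega
  have hmN : m ≤ N := by nlinarith
  have hlt' : ∀ f ∈ P', ∀ y ∈ A, f y < m := by
    intro f hf y hy
    obtain ⟨g, hg, hfg⟩ := hv' f hf
    rw [hfg, hm, Nat.lt_succ_iff]
    exact Nat.div_le_div_right (hlt g hg y hy).le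
  set D := 16 * k ^ 2 with hD
  have hD1 : 1 ≤ D := by omega
  obtain ⟨𝒮, hc2, h𝒮⟩ := sauer D hD1 A P' h0'
  rw [hA] at hc2
  have halpha : alphaHier k m ≤ 3 := by
    obtain ⟨d, rfl⟩ : ∃ d, k = d + 1 := ⟨k - 1, by omega⟩
    exact (alpha_mono d m N hmN).trans hN
  set supp : (ι → Finset ℕ) → Finset ι := fun S => A.filter (fun y => (S y).Nonempty) with hsupp
  have hsc : ∀ S ∈ 𝒮, D * (supp S).card ≤ 108 * (k * m) := by
    intro S hS
    have hBA : supp S ⊆ A := Finset.filter_subset _ _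
    have h1 := claim (k - 2) m 0 (supp S) S (fun y hy => (Finset.mem_filter.1 hy).2)
      (fun y hy => realizes_lt A P' m hlt' S (h𝒮 S hS).2.2 y (hBA hy))
      (not_form_of_realizes A P' hP' S (h𝒮 S hS).2.2 _ hBA)
    rw [show k - 2 + 2 = k by omega] at h1
    have h2 : ∑ y ∈ supp S, (S y).card = (supp S).card * D := by
      rw [Finset.sum_congr rfl (g := fun _ => D), Finset.sum_const, smul_eq_mul]
      intro y hy
      rcases (h𝒮 S hS).2.1 y with h | h
      · have := (Finset.mem_filter.1 hy).2
        rw [h] at this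
        simp at this
      · exact h
    rw [h2] at h1
    have h3 : 18 * k * (m * alphaHier k m) ≤ 18 * k * (m * 3) := by gcongr
    have h4 : D * (supp S).card = 16 * (k ^ 2 * (supp S).card) := by rw [hD]; ring
    have h5 : 8 * k ^ 2 * (supp S).card = 8 * (k ^ 2 * (supp S).card) := by ring
    have h6 : 18 * k * (m * 3) = 54 * (k * m) := by ring
    rw [mul_comm] at h1
    omega
  have hkx : (0 : ℝ) < k := by linarith
  -- bound for each fixed support
  have hfib : ∀ B ∈ A.powerset, ((𝒮.filter (fun S => supp S = B)).card : ℝ) ≤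
      Real.exp 32 ^ x * (K ^ ((216 : ℝ) / k)) ^ x := by
    intro B hB
    have hBA := Finset.mem_powerset.1 hB
    by_cases hemp : (𝒮.filter (fun S => supp S = B)) = ∅
    · rw [hemp]
      simp only [Finset.card_empty, Nat.cast_zero]
      positivity
    obtain ⟨S₀, hS₀⟩ := Finset.nonempty_iff_ne_empty.2 hemp
    have hB1 : D * B.card ≤ 108 * (k * m) := by
      have := hsc S₀ (Finset.mem_filter.1 hS₀).1
      rwa [(Finset.mem_filter.1 hS₀).2] at this
    have hBx : B.card < x := by
      have h1 : k ^ 2 * (D * B.card) ≤ 216 * (k * x) := by nlinarith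
      have h2 : k ^ 2 * (D * B.card) = 16 * k * (k ^ 3 * B.card) := by rw [hD]; ring
      have h3 : 16 * (k ^ 3 * B.card) ≤ 216 * x := by
        have h4 : k * (16 * (k ^ 3 * B.card)) ≤ k * (216 * x) := by
          rw [h2] at h1
          linarith
        exact Nat.le_of_mul_le_mul_left h4 (by omega)
      have h5 : 27 ≤ k ^ 3 := by nlinarith
      have h6 : 27 * B.card ≤ k ^ 3 * B.card := Nat.mul_le_mul_right _ h5
      omega
    set R := ⌊Real.exp m * K ^ B.card⌋₊ with hR
    have hcs := count_support A B hBA P' D m hP' hlt' (𝒮.filter (fun S => supp S = B)) (by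
      intro S hS
      obtain ⟨hS1, hS2⟩ := Finset.mem_filter.1 hS
      refine ⟨?_, ?_, (h𝒮 S hS1).2.2⟩
      · intro y hy
        rw [← hS2] at hy
        rcases (h𝒮 S hS1).2.1 y with h | h
        · have := (Finset.mem_filter.1 hy).2
          rw [h] at this
          simp at this
        · exact h
      · intro y hy
        by_cases hyA : y ∈ A
        · by_contra hne
          apply hy
          rw [← hS2]
          exact Finset.mem_filter.2 ⟨hyA, Finset.nonempty_iff_ne_empty.2 hne⟩
        · exact (h𝒮 S hS1).1 y hyA) hD1 R (by
      intro Q hQ0 hQ hQm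
      refine Nat.le_floor ?_
      exact small_count B Q m K hQ0 hQ hQm
        (fun Q h1 h2 h3 => ih B.card hBx (by omega) B rfl Q h1 h2 h3))
    have hR' : (R : ℝ) ≤ Real.exp m * K ^ B.card := Nat.floor_le (by positivity)
    have h1 : ((𝒮.filter (fun S => supp S = B)).card : ℝ) ≤ (Real.exp m * K ^ B.card) ^ D := by
      have : ((𝒮.filter (fun S => supp S = B)).card : ℝ) ≤ (R : ℝ) ^ D := by exact_mod_cast hcs
      exact this.trans (pow_le_pow_left₀ (by positivity) hR' _)
    refine h1.trans ?_
    rw [mul_pow]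
    refine mul_le_mul ?_ ?_ (by positivity) (by positivity)
    · rw [← Real.exp_nat_mul, ← Real.exp_nat_mul]
      refine Real.exp_le_exp.2 ?_
      have : D * m ≤ x * 32 := by rw [hD]; nlinarith
      exact_mod_cast this
    · rw [← pow_mul, ← Real.rpow_natCast K, ← Real.rpow_mul_natCast hKpos.le]
      refine Real.rpow_le_rpow_of_exponent_le hKone ?_
      rw [div_mul_eq_mul_div, le_div_iff₀ hkx]
      have h2 : B.card * D * k ≤ 216 * x := by
        have : k * (D * B.card) ≤ k * (108 * (k * m)) := Nat.mul_le_mul_left _ hB1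
        nlinarith
      exact_mod_cast h2
  have hcard : (𝒮.card : ℝ) ≤ 2 ^ x * (Real.exp 32 ^ x * (K ^ ((216 : ℝ) / k)) ^ x) := by
    have h1 : 𝒮.card = ∑ B ∈ A.powerset, (𝒮.filter (fun S => supp S = B)).card :=
      Finset.card_eq_sum_card_fiberwise
        (fun S _ => Finset.mem_coe.2 (Finset.mem_powerset.2 (Finset.filter_subset _ _)))
    rw [h1, Nat.cast_sum]
    refine (Finset.sum_le_sum hfib).trans ?_
    rw [Finset.sum_const, Finset.card_powerset, hA, nsmul_eq_mul]
    push_cast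
    exact le_rfl
  have hc1' : (P.card : ℝ) ≤ ((k : ℝ) ^ 2) ^ x * P'.card := by exact_mod_cast hc1
  have hc2' : (P'.card : ℝ) ≤ (16 * (k : ℝ) ^ 2) ^ x * 𝒮.card := by
    have : (P'.card : ℝ) ≤ ((D : ℕ) : ℝ) ^ x * 𝒮.card := by exact_mod_cast hc2
    rw [hD] at this
    push_cast at this
    exact this
  calc (P.card : ℝ) ≤ ((k : ℝ) ^ 2) ^ x * ((16 * (k : ℝ) ^ 2) ^ x *
        (2 ^ x * (Real.exp 32 ^ x * (K ^ ((216 : ℝ) / k)) ^ x))) := by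
        refine hc1'.trans ?_
        gcongr
        refine hc2'.trans ?_
        gcongr
    _ = (32 * Real.exp 32 * (k : ℝ) ^ 4 * K ^ ((216 : ℝ) / k)) ^ x := by
        rw [← mul_pow, ← mul_pow, ← mul_pow, ← mul_pow]
        congr 1
        ring
    _ ≤ K ^ x := pow_le_pow_left₀ (by positivity) hK _

lemma exists_large (ε : ℝ) (hε : 0 < ε) : ∃ k₀ : ℕ, ∀ k : ℕ, k₀ ≤ k → 3 ≤ k ∧
    32 * Real.exp 32 * (k : ℝ) ^ 4 * ((k : ℝ) ^ (4 + ε)) ^ ((216 : ℝ) / k) ≤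
      (k : ℝ) ^ (4 + ε) := by
  have h1 : Filter.Tendsto (fun k : ℕ => (k : ℝ) ^ (ε / 2)) Filter.atTop Filter.atTop :=
    (tendsto_rpow_atTop (by linarith)).comp tendsto_natCast_atTop_atTop
  obtain ⟨k₁, hk₁⟩ := Filter.eventually_atTop.1 (h1.eventually_ge_atTop (32 * Real.exp 32))
  obtain ⟨k₂, hk₂⟩ := exists_nat_ge ((4 + ε) * 216 / (ε / 2))
  refine ⟨max 3 (max k₁ k₂), fun k hk => ?_⟩
  have hk3 : 3 ≤ k := (le_max_left _ _).trans hk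
  have hkk1 : k₁ ≤ k := (le_max_left _ _).trans ((le_max_right _ _).trans hk)
  have hkk2 : k₂ ≤ k := (le_max_right _ _).trans ((le_max_right _ _).trans hk)
  refine ⟨hk3, ?_⟩
  have hkone : (1 : ℝ) ≤ k := by exact_mod_cast (by omega : 1 ≤ k)
  have hkpos : (0 : ℝ) < k := by linarith
  have h2 := hk₁ k hkk1
  have h3 : (4 + ε) * (216 / k) ≤ ε / 2 := by
    have : (4 + ε) * 216 / (ε / 2) ≤ k := hk₂.trans (by exact_mod_cast hkk2)
    rw [div_le_iff₀ (by linarith)] at this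
    rw [← mul_div_assoc, div_le_iff₀ hkpos]
    linarith
  have h4 : ((k : ℝ) ^ (4 + ε)) ^ ((216 : ℝ) / k) ≤ (k : ℝ) ^ (ε / 2) := by
    rw [← Real.rpow_mul hkpos.le]
    exact Real.rpow_le_rpow_of_exponent_le hkone h3
  calc 32 * Real.exp 32 * (k : ℝ) ^ 4 * ((k : ℝ) ^ (4 + ε)) ^ ((216 : ℝ) / k)
      ≤ (k : ℝ) ^ (ε / 2) * (k : ℝ) ^ 4 * (k : ℝ) ^ (ε / 2) := by gcongr
    _ = (k : ℝ) ^ (4 + ε) := by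
        rw [← Real.rpow_natCast, ← Real.rpow_add hkpos, ← Real.rpow_add hkpos]
        congr 1
        push_cast
        ring

/-- The functions attached to a family of permutations. -/
lemma ns_of_vc (n : ℕ) (P : Finset (Equiv.Perm (Fin n))) (hP : VCDimLE n 3 P)
    (Q : Finset (Fin n → ℕ)) (hQ : ∀ f ∈ Q, ∃ π ∈ P, f = fun x => (π x : ℕ)) :
    NS Finset.univ Q := by
  intro e he _ h
  have hsm : StrictMono (e ∘ Tuple.sort e) :=
    (Tuple.monotone_sort e).strictMono_of_injective (he.comp (Tuple.sort e).injective)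
  refine hP (e ∘ Tuple.sort e) ⟨hsm, fun σ => ?_⟩
  obtain ⟨f, hf, hσ⟩ := h ((Tuple.sort e).symm.trans σ)
  obtain ⟨π, hπ, rfl⟩ := hQ f hf
  have key : ∀ i j : Fin 4, σ i < σ j →
      π ((e ∘ Tuple.sort e) i) < π ((e ∘ Tuple.sort e) j) := by
    intro i j hij
    have := hσ (Tuple.sort e i) (Tuple.sort e j) (by simpa using hij)
    exact this
  refine ⟨π, hπ, fun i j => ⟨key i j, fun hij => ?_⟩⟩
  by_contra hcon
  rcases (not_lt.1 hcon).lt_or_eq with h1 | h1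
  · exact absurd (key j i h1) (not_lt.2 hij.le)
  · rw [σ.injective h1] at hij
    exact lt_irrefl _ hij

end RThree

/-- For every `ε > 0` there exists `n₀` such that for every `n ≥ n₀`,
every family of `n`-permutations with VC-dimension at most 3 has size at most
`α(n) ^ ((4+ε)·n)`. -/
theorem r3_upper_bound :
    ∀ ε : ℝ, 0 < ε → ∃ n₀ : ℕ, ∀ n : ℕ, n₀ ≤ n →
      ∀ P : Finset (Equiv.Perm (Fin n)), VCDimLE n 3 P →
        (P.card : ℝ) ≤ (invAck n : ℝ) ^ ((4 + ε) * (n : ℝ)) := by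
  classical
  intro ε hε
  obtain ⟨k₀, hk₀⟩ := RThree.exists_large ε hε
  obtain ⟨n₀, hn₀⟩ := RThree.invAck_unbounded k₀
  refine ⟨n₀, fun n hn P hP => ?_⟩
  obtain ⟨hk3, hK⟩ := hk₀ (invAck n) (hn₀ n hn)
  have hkone : (1 : ℝ) ≤ invAck n := by exact_mod_cast (by omega : 1 ≤ invAck n)
  have hinj : Function.Injective (fun (π : Equiv.Perm (Fin n)) (x : Fin n) => (π x : ℕ)) := by
    intro π π' h
    ext x
    exact congrFun h x
  have hK1 : (invAck n : ℝ) ^ 3 ≤ (invAck n : ℝ) ^ (4 + ε) := by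
    rw [← Real.rpow_natCast]
    refine Real.rpow_le_rpow_of_exponent_le hkone ?_
    push_cast
    linarith
  have hmain := RThree.main_ind (ι := Fin n) n (invAck n) hk3 (RThree.invAck_spec n).2
    ((invAck n : ℝ) ^ (4 + ε)) hK1 hK n le_rfl Finset.univ (by simp)
    (P.image (fun (π : Equiv.Perm (Fin n)) (x : Fin n) => (π x : ℕ)))
    (fun f _ y hy => absurd (Finset.mem_univ y) hy)
    (RThree.ns_of_vc n P hP _ (by
      intro f hf
      obtain ⟨π, hπ, rfl⟩ := Finset.mem_image.1 hf
      exact ⟨π, hπ, rfl⟩))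
    (by
      intro f hf y _
      obtain ⟨π, hπ, rfl⟩ := Finset.mem_image.1 hf
      exact (π y).2)
  rw [Finset.card_image_of_injective _ hinj, ← Real.rpow_mul_natCast (by linarith)] at hmain
  exact hmain
end

section
/- There exists a constant C such that for every integer n ≥ 1, the maximum size r₄(n) of a family of n-permutations with VC-dimension at most 4 satisfies r₄(n) ≤ 2^{n·(2α(n) + 3 log₂ α(n) + C)}. -/
set_option linter.unusedSectionVars false

namespace R4

variable {ι : Type} [DecidableEq ι]

/-- The columns of `T` form a formation with `s` row intervals (fibers of a monotone map). -/
def Form (s : ℕ) (S : ι → Finset ℕ) (T : Finset ι) : Prop :=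
  ∃ g : ℕ → ℕ, Monotone g ∧ ∀ j ∈ T, ∀ i < s, ∃ x ∈ S j, g x = i

/-- No five columns among `U` contain a formation with `s` intervals. -/
def Free (s : ℕ) (U : Finset ι) (S : ι → Finset ℕ) : Prop :=
  ∀ T ⊆ U, T.card = 5 → ¬ Form s S T

/-- Linear bound on the number of columns of weight at least `k`, for at most `p` rows. -/
def Bd (ι : Type) (s k p L : ℕ) : Prop :=
  ∀ (U : Finset ι) (S : ι → Finset ℕ) (V : Finset ℕ), V.card ≤ p →
    (∀ j ∈ U, S j ⊆ V ∧ k ≤ (S j).card) → Free s U S → U.card ≤ L * V.card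

lemma Free.mono {s : ℕ} {U U' : Finset ι} {S : ι → Finset ℕ} (h : Free s U S) (hU : U' ⊆ U) :
    Free s U' S := fun T hT hc => h T (hT.trans hU) hc

lemma Bd.mono {s k p L k' p' L' : ℕ} (h : Bd ι s k p L) (hk : k ≤ k') (hp : p' ≤ p)
    (hL : L ≤ L') : Bd ι s k' p' L' := fun U S V hV hS hF =>
  (h U S V (hV.trans hp) (fun j hj => ⟨(hS j hj).1, hk.trans (hS j hj).2⟩) hF).trans
    (Nat.mul_le_mul_right _ hL)

lemma Bd.trivial {s k p : ℕ} (h : p < k) : Bd ι s k p 0 := by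
  intro U S V hV hS _
  have : U = ∅ := by
    by_contra hne
    obtain ⟨j, hj⟩ := Finset.nonempty_iff_ne_empty.mpr hne
    have := Finset.card_le_card (hS j hj).1
    have := (hS j hj).2
    omega
  simp [this]

/-- fibers with fewer than five elements -/
lemma card_of_fib {U : Finset ι} {V : Finset ℕ} (φ : ι → ℕ) (h1 : ∀ j ∈ U, φ j ∈ V)
    (h2 : ∀ x ∈ V, ∀ T ⊆ U, T.card = 5 → (∀ j ∈ T, φ j = x) → False) : U.card ≤ 4 * V.card := by
  refine Finset.card_le_mul_card_image_of_maps_to h1 4 ?_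
  intro x hx
  by_contra hc
  push Not at hc
  obtain ⟨T, hT, hc5⟩ := Finset.exists_subset_card_eq (show 5 ≤ _ from hc)
  refine h2 x hx T (hT.trans (Finset.filter_subset _ _)) hc5 ?_
  intro j hj
  exact (Finset.mem_filter.mp (hT hj)).2

lemma bd2 (p : ℕ) : Bd ι 2 2 p 4 := by
  intro U S V _ hS hF
  have key : ∀ j ∈ U, ∃ x ∈ S j, ∃ y ∈ S j, x < y := by
    intro j hj
    obtain ⟨a, ha, b, hb, hab⟩ := Finset.one_lt_card.mp (show 1 < (S j).card from (hS j hj).2)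
    rcases lt_or_gt_of_ne hab with h | h
    · exact ⟨a, ha, b, hb, h⟩
    · exact ⟨b, hb, a, ha, h⟩
  choose! φ h1 ψ h2 h3 using key
  refine card_of_fib φ (fun j hj => (hS j hj).1 (h1 j hj)) ?_
  intro x hx T hT hc hφ
  refine hF T hT hc ⟨fun y => if y ≤ x then 0 else 1, ?_, ?_⟩
  · intro a b hab
    dsimp only
    split_ifs <;> omega
  · intro j hj i hi
    have := h3 j (hT hj)
    rw [hφ j hj] at this
    interval_cases i
    · exact ⟨φ j, h1 j (hT hj), by simp [hφ j hj]⟩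
    · exact ⟨ψ j, h2 j (hT hj), by simp [this]⟩

lemma bd3 (p : ℕ) : Bd ι 3 3 p 4 := by
  intro U S V _ hS hF
  have key : ∀ j ∈ U, ∃ x ∈ S j, ∃ y ∈ S j, ∃ z ∈ S j, y < x ∧ x < z := by
    intro j hj
    have h3 := (hS j hj).2
    have hne : (S j).Nonempty := Finset.card_pos.mp (by omega)
    have hmm : (S j).min' hne ≠ (S j).max' hne := by
      intro h
      have : (S j).card ≤ 1 := Finset.card_le_one.mpr (by
        intro a ha b hb
        have := Finset.min'_le _ _ ha
        have := Finset.min'_le _ _ hb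
        have := Finset.le_max' _ _ ha
        have := Finset.le_max' _ _ hb
        omega)
      omega
    have : 0 < (((S j).erase ((S j).min' hne)).erase ((S j).max' hne)).card := by
      rw [Finset.card_erase_of_mem, Finset.card_erase_of_mem (Finset.min'_mem _ _)]
      · omega
      · exact Finset.mem_erase.mpr ⟨hmm.symm, Finset.max'_mem _ _⟩
    obtain ⟨x, hx⟩ := Finset.card_pos.mp this
    simp only [Finset.mem_erase] at hx
    refine ⟨x, hx.2.2, _, Finset.min'_mem _ hne, _, Finset.max'_mem _ hne, ?_, ?_⟩
    · exact lt_of_le_of_ne (Finset.min'_le _ _ hx.2.2) (Ne.symm hx.2.1)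
    · exact lt_of_le_of_ne (Finset.le_max' _ _ hx.2.2) hx.1
  choose! φ h1 ψ h2 χ h3 h4 h5 using key
  refine card_of_fib φ (fun j hj => (hS j hj).1 (h1 j hj)) ?_
  intro x hx T hT hc hφ
  refine hF T hT hc ⟨fun y => if y < x then 0 else if y ≤ x then 1 else 2, ?_, ?_⟩
  · intro a b hab
    dsimp only
    split_ifs <;> omega
  · intro j hj i hi
    have e1 := h4 j (hT hj)
    have e2 := h5 j (hT hj)
    rw [hφ j hj] at e1 e2
    interval_cases i
    · exact ⟨ψ j, h2 j (hT hj), by simp [e1]⟩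
    · exact ⟨φ j, h1 j (hT hj), by simp [hφ j hj]⟩
    · refine ⟨χ j, h3 j (hT hj), ?_⟩
      dsimp only
      rw [if_neg (by omega), if_neg (by omega)]

/-- the group map: rank divided by the group size -/
def grp (V : Finset ℕ) (p x : ℕ) : ℕ := (V.filter (· < x)).card / p

lemma grp_mono (V : Finset ℕ) (p : ℕ) : Monotone (grp V p) := by
  intro a b hab
  apply Nat.div_le_div_right
  apply Finset.card_le_card
  intro y hy
  simp only [Finset.mem_filter] at hy ⊢
  exact ⟨hy.1, by omega⟩

lemma rank_lt {V : Finset ℕ} {x : ℕ} (hx : x ∈ V) : (V.filter (· < x)).card < V.card := by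
  apply Finset.card_lt_card
  rw [Finset.filter_ssubset]
  exact ⟨x, hx, by simp⟩

lemma rank_inj {V : Finset ℕ} {x y : ℕ} (hx : x ∈ V) (hxy : x < y) :
    (V.filter (· < x)).card < (V.filter (· < y)).card := by
  apply Finset.card_lt_card
  rw [Finset.ssubset_iff_of_subset]
  · exact ⟨x, by simp [hx, hxy], by simp⟩
  · intro z hz
    simp only [Finset.mem_filter] at hz ⊢
    exact ⟨hz.1, by omega⟩

lemma grp_lt {V : Finset ℕ} {p q x : ℕ} (hx : x ∈ V) (h : V.card ≤ p * q) :
    grp V p x < q := by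
  have := rank_lt hx
  exact Nat.div_lt_of_lt_mul (by omega)

lemma grp_fib (V : Finset ℕ) {p : ℕ} (hp : 0 < p) (i : ℕ) :
    (V.filter (fun x => grp V p x = i)).card ≤ p := by
  have : (V.filter (fun x => grp V p x = i)).card ≤ (Finset.Ico (i * p) (i * p + p)).card := by
    apply Finset.card_le_card_of_injOn (fun x => (V.filter (· < x)).card)
    · intro x hx
      have hx := Finset.mem_filter.mp hx
      simp only [grp] at hx
      simp only [Finset.coe_Ico, Set.mem_Ico]
      have h1 := Nat.div_add_mod (V.filter (· < x)).card p
      have h2 := Nat.mod_lt (V.filter (· < x)).card hp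
      rw [hx.2, mul_comm] at h1
      omega
    · intro x hx y hy hxy
      have hx := Finset.mem_filter.mp hx
      have hy := Finset.mem_filter.mp hy
      by_contra hne
      rcases lt_or_gt_of_ne hne with h | h
      · exact absurd hxy (rank_inj hx.1 h).ne
      · exact absurd hxy (rank_inj hy.1 h).ne'
  simpa using this

lemma recBd {s k k1 k2 k3 p q m L L1 L2 L3 : ℕ} (hp : 0 < p) (hk3 : 3 ≤ k3)
    (hk1 : 1 ≤ k1) (hk2 : 1 ≤ k2)
    (hk : 2 * (k1 - 1) + (k2 - 1) * (k3 - 3) + 1 ≤ k) (hm : m ≤ p * q)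
    (b0 : Bd ι (s + 2) k p L) (b1 : Bd ι (s + 1) k1 p L1) (b2 : Bd ι s k2 p L2)
    (b3 : Bd ι (s + 2) k3 q L3) :
    ∀ (U : Finset ι) (S : ι → Finset ℕ) (V : Finset ℕ), V.card ≤ m →
    (∀ j ∈ U, S j ⊆ V ∧ k ≤ (S j).card) → Free (s + 2) U S →
      U.card ≤ (L + 2 * L1 + L2) * V.card + L3 * q := by
  intro U S V hV hS hF
  set γ := grp V p with hγ
  have γm : Monotone γ := grp_mono V p
  have γq : ∀ x ∈ V, γ x < q := fun x hx => grp_lt hx (hV.trans hm)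
  let W : ℕ → Finset ℕ := fun i => V.filter (fun x => γ x = i)
  let SS : ℕ → ι → Finset ℕ := fun i j => (S j).filter (fun x => γ x = i)
  let U0 := U.filter (fun j => k3 ≤ ((S j).image γ).card)
  let U1 : ℕ → Finset ι := fun i => U.filter (fun j => ∀ x ∈ S j, γ x = i)
  let U2 : ℕ → Finset ι := fun i => U.filter (fun j => k1 ≤ (SS i j).card ∧ ∃ x ∈ S j, i < γ x)
  let U3 : ℕ → Finset ι := fun i => U.filter (fun j => k1 ≤ (SS i j).card ∧ ∃ x ∈ S j, γ x < i)
  let U4 : ℕ → Finset ι := fun i => U.filter (fun j => k2 ≤ (SS i j).card ∧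
    (∃ x ∈ S j, γ x < i) ∧ ∃ x ∈ S j, i < γ x)
  have hWp : ∀ i, (W i).card ≤ p := fun i => grp_fib V hp i
  have hSW : ∀ i, ∀ j ∈ U, SS i j ⊆ W i := by
    intro i j hj x hx
    simp only [SS, W, Finset.mem_filter] at hx ⊢
    exact ⟨(hS j hj).1 hx.1, hx.2⟩
  have c0 : U0.card ≤ L3 * q := by
    have := b3 U0 (fun j => (S j).image γ) (Finset.range q) (by simp) ?_ ?_
    · simpa using this
    · intro j hj
      simp only [U0, Finset.mem_filter] at hj
      refine ⟨?_, hj.2⟩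
      intro y hy
      obtain ⟨x, hx, rfl⟩ := Finset.mem_image.mp hy
      exact Finset.mem_range.mpr (γq x ((hS j hj.1).1 hx))
    · rintro T hT hc ⟨g, hg, h⟩
      refine hF T (hT.trans (Finset.filter_subset _ _)) hc ⟨g ∘ γ, hg.comp γm, ?_⟩
      intro j hj i hi
      obtain ⟨y, hy, hyi⟩ := h j hj i hi
      obtain ⟨x, hx, rfl⟩ := Finset.mem_image.mp hy
      exact ⟨x, hx, hyi⟩
  have c1 : ∀ i, (U1 i).card ≤ L * (W i).card := by
    intro i
    refine b0 (U1 i) S (W i) (hWp i) ?_ (hF.mono (Finset.filter_subset _ _))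
    intro j hj
    simp only [U1, Finset.mem_filter] at hj
    refine ⟨?_, (hS j hj.1).2⟩
    intro x hx
    simp only [W, Finset.mem_filter]
    exact ⟨(hS j hj.1).1 hx, hj.2 x hx⟩
  have c2 : ∀ i, (U2 i).card ≤ L1 * (W i).card := by
    intro i
    refine b1 (U2 i) (SS i) (W i) (hWp i) ?_ ?_
    · intro j hj
      simp only [U2, Finset.mem_filter] at hj
      exact ⟨hSW i j hj.1, hj.2.1⟩
    · rintro T hT hc ⟨g, hg, h⟩
      refine hF T (hT.trans (Finset.filter_subset _ _)) hc
        ⟨fun x => if γ x ≤ i then min (g x) s else s + 1, ?_, ?_⟩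
      · intro a b hab
        have := γm hab
        have := hg hab
        dsimp only
        split_ifs <;> omega
      · intro j hj l hl
        rcases Nat.lt_or_ge l (s + 1) with hl' | hl'
        · obtain ⟨x, hx, hxl⟩ := h j hj l hl'
          simp only [SS, Finset.mem_filter] at hx
          refine ⟨x, hx.1, ?_⟩
          dsimp only
          rw [if_pos (by omega)]
          omega
        · obtain ⟨x, hx, hxi⟩ := (Finset.mem_filter.mp (hT hj)).2.2
          refine ⟨x, hx, ?_⟩
          dsimp only
          rw [if_neg (by omega)]
          omega
  have c3 : ∀ i, (U3 i).card ≤ L1 * (W i).card := by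
    intro i
    refine b1 (U3 i) (SS i) (W i) (hWp i) ?_ ?_
    · intro j hj
      simp only [U3, Finset.mem_filter] at hj
      exact ⟨hSW i j hj.1, hj.2.1⟩
    · rintro T hT hc ⟨g, hg, h⟩
      refine hF T (hT.trans (Finset.filter_subset _ _)) hc
        ⟨fun x => if γ x < i then 0 else g x + 1, ?_, ?_⟩
      · intro a b hab
        have := γm hab
        have := hg hab
        dsimp only
        split_ifs <;> omega
      · intro j hj l hl
        rcases Nat.eq_zero_or_pos l with hl' | hl'
        · obtain ⟨x, hx, hxi⟩ := (Finset.mem_filter.mp (hT hj)).2.2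
          refine ⟨x, hx, ?_⟩
          dsimp only
          rw [if_pos (by omega)]
          omega
        · obtain ⟨x, hx, hxl⟩ := h j hj (l - 1) (by omega)
          simp only [SS, Finset.mem_filter] at hx
          refine ⟨x, hx.1, ?_⟩
          dsimp only
          rw [if_neg (by omega)]
          omega
  have c4 : ∀ i, (U4 i).card ≤ L2 * (W i).card := by
    intro i
    refine b2 (U4 i) (SS i) (W i) (hWp i) ?_ ?_
    · intro j hj
      simp only [U4, Finset.mem_filter] at hj
      exact ⟨hSW i j hj.1, hj.2.1⟩
    · rintro T hT hc ⟨g, hg, h⟩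
      refine hF T (hT.trans (Finset.filter_subset _ _)) hc
        ⟨fun x => if γ x < i then 0 else if γ x ≤ i then min (g x + 1) s else s + 1, ?_, ?_⟩
      · intro a b hab
        have := γm hab
        have := hg hab
        dsimp only
        split_ifs <;> omega
      · intro j hj l hl
        obtain ⟨⟨y, hy, hyi⟩, ⟨z, hz, hzi⟩⟩ := (Finset.mem_filter.mp (hT hj)).2.2
        rcases Nat.eq_zero_or_pos l with hl' | hl'
        · refine ⟨y, hy, ?_⟩
          dsimp only
          rw [if_pos (by omega)]
          omega
        rcases Nat.lt_or_ge l (s + 1) with hl2 | hl2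
        · obtain ⟨x, hx, hxl⟩ := h j hj (l - 1) (by omega)
          simp only [SS, Finset.mem_filter] at hx
          refine ⟨x, hx.1, ?_⟩
          dsimp only
          rw [if_neg (by omega), if_pos (by omega)]
          omega
        · refine ⟨z, hz, ?_⟩
          dsimp only
          rw [if_neg (by omega), if_neg (by omega)]
          omega
  have cover : U ⊆ U0 ∪ (Finset.range q).biUnion
      (fun i => U1 i ∪ (U2 i ∪ (U3 i ∪ U4 i))) := by
    intro j hj
    by_contra hcon
    have hSV := (hS j hj).1
    have hn0 : ((S j).image γ).card < k3 := by
      by_contra h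
      exact hcon (Finset.mem_union_left _ (Finset.mem_filter.mpr ⟨hj, by omega⟩))
    have hni : ∀ i ∈ (S j).image γ, j ∉ U1 i ∧ j ∉ U2 i ∧ j ∉ U3 i ∧ j ∉ U4 i := by
      intro i hi
      obtain ⟨x, hx, rfl⟩ := Finset.mem_image.mp hi
      have hq := γq x (hSV hx)
      by_contra h
      apply hcon
      refine Finset.mem_union_right _ (Finset.mem_biUnion.mpr ⟨_, Finset.mem_range.mpr hq, ?_⟩)
      simp only [Finset.mem_union]
      tauto
    simp only [U1, U2, U3, U4, Finset.mem_filter, hj, true_and] at hni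
    have hkc := (hS j hj).2
    set D := (S j).image γ with hD
    have hDne : D.Nonempty := by
      rw [hD, Finset.image_nonempty]
      exact Finset.card_pos.mp (by omega)
    have hsum : (S j).card = ∑ i ∈ D, (SS i j).card :=
      Finset.card_eq_sum_card_image γ (S j)
    have ha := D.min'_mem hDne
    have hb := D.max'_mem hDne
    set a := D.min' hDne
    set b := D.max' hDne
    have hDab : ∀ i ∈ D, a ≤ i ∧ i ≤ b := fun i hi => ⟨D.min'_le i hi, D.le_max' i hi⟩
    obtain ⟨xa, hxa, hxaa⟩ := Finset.mem_image.mp ha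
    obtain ⟨xb, hxb, hxbb⟩ := Finset.mem_image.mp hb
    have hab : a < b := by
      by_contra hle
      apply (hni a ha).1
      intro x hx
      have := hDab _ (Finset.mem_image_of_mem γ hx)
      omega
    have ea : (SS a j).card ≤ k1 - 1 := by
      by_contra h
      exact (hni a ha).2.1 ⟨by omega, xb, hxb, by omega⟩
    have eb : (SS b j).card ≤ k1 - 1 := by
      by_contra h
      exact (hni b hb).2.2.1 ⟨by omega, xa, hxa, by omega⟩
    have ec : ∀ i ∈ (D.erase a).erase b, (SS i j).card ≤ k2 - 1 := by
      intro i hi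
      simp only [Finset.mem_erase] at hi
      have := hDab i hi.2.2
      by_contra h
      exact (hni i hi.2.2).2.2.2 ⟨by omega, ⟨xa, hxa, by omega⟩, ⟨xb, hxb, by omega⟩⟩
    have hb' : b ∈ D.erase a := Finset.mem_erase.mpr ⟨by omega, hb⟩
    rw [← Finset.add_sum_erase _ _ ha, ← Finset.add_sum_erase _ _ hb'] at hsum
    have es := Finset.sum_le_card_nsmul _ _ _ ec
    rw [Finset.card_erase_of_mem hb', Finset.card_erase_of_mem ha, smul_eq_mul] at es
    have : (D.card - 1 - 1) * (k2 - 1) ≤ (k2 - 1) * (k3 - 3) := by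
      rw [mul_comm]
      exact Nat.mul_le_mul_left _ (by omega)
    omega
  have hWsum : ∑ i ∈ Finset.range q, (W i).card = V.card :=
    (Finset.card_eq_sum_card_fiberwise (f := γ) (t := Finset.range q)
      (fun x hx => by simpa using γq x hx)).symm
  calc U.card ≤ _ := Finset.card_le_card cover
    _ ≤ U0.card + ∑ i ∈ Finset.range q, ((U1 i).card + ((U2 i).card + ((U3 i).card + (U4 i).card))) := by
        refine (Finset.card_union_le _ _).trans (Nat.add_le_add_left ?_ _)
        refine Finset.card_biUnion_le.trans (Finset.sum_le_sum fun i _ => ?_)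
        refine (Finset.card_union_le _ _).trans (Nat.add_le_add_left ?_ _)
        refine (Finset.card_union_le _ _).trans (Nat.add_le_add_left ?_ _)
        exact Finset.card_union_le _ _
    _ ≤ L3 * q + ∑ i ∈ Finset.range q, (L + 2 * L1 + L2) * (W i).card := by
        refine Nat.add_le_add c0 (Finset.sum_le_sum fun i _ => ?_)
        have := c1 i
        have := c2 i
        have := c3 i
        have := c4 i
        linarith
    _ = _ := by rw [← Finset.mul_sum, hWsum, add_comm]

end R4

namespace R4

/-- square-root damping -/
def gg (p : ℕ) : ℕ := Nat.sqrt (p / 8)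

/-- The Ackermann-type thresholds. -/
def AA : ℕ → ℕ → ℕ
  | 0, h => 2 ^ (20 + h)
  | d + 1, h => Nat.rec (2 ^ 20) (fun _ p => AA d (gg p)) h

lemma AA_zero (h : ℕ) : AA 0 h = 2 ^ (20 + h) := by rw [AA]
lemma AA_succ_zero (d : ℕ) : AA (d + 1) 0 = 2 ^ 20 := by rw [AA]; rfl
lemma AA_succ_succ (d h : ℕ) : AA (d + 1) (h + 1) = AA d (gg (AA (d + 1) h)) := by
  conv_lhs => rw [AA]
  conv_rhs => rw [AA]

lemma AA_ge : ∀ d h : ℕ, 2 ^ 20 ≤ AA d h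
  | 0, h => by rw [AA_zero]; exact Nat.pow_le_pow_right (by norm_num) (by omega)
  | d + 1, 0 => by rw [AA_succ_zero]
  | d + 1, h + 1 => by rw [AA_succ_succ]; exact AA_ge d _

lemma gg_mono {a b : ℕ} (h : a ≤ b) : gg a ≤ gg b :=
  Nat.sqrt_le_sqrt (Nat.div_le_div_right h)

lemma gg_le (a : ℕ) : gg a ≤ a := (Nat.sqrt_le_self _).trans (Nat.div_le_self _ _)

lemma gg_sq {p : ℕ} (hp : 8 ≤ p) : 1 ≤ gg p ∧ 2 * (gg p + 1) ^ 2 ≤ p := by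
  have h1 : 1 ≤ gg p := by
    unfold gg
    rw [Nat.le_sqrt]
    omega
  refine ⟨h1, ?_⟩
  have h2 : gg p * gg p ≤ p / 8 := Nat.sqrt_le _
  have h3 : 8 * (gg p * gg p) ≤ p := by omega
  nlinarith

variable {ι : Type} [DecidableEq ι]

lemma base4 : ∀ H : ℕ, Bd ι 4 5 (2 ^ H) (12 * H)
  | 0 => by simpa using Bd.trivial (ι := ι) (s := 4) (show 1 < 5 by norm_num)
  | H + 1 => by
    intro U S V hV hS hF
    have := recBd (ι := ι) (s := 2) (k := 5) (k1 := 3) (k2 := 2) (k3 := 3) (p := 2 ^ H) (q := 2)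
      (m := 2 ^ (H + 1)) (by positivity) le_rfl (by norm_num) (by norm_num) (by norm_num)
      (by rw [pow_succ]) (base4 H) (bd3 _) (bd2 _) (Bd.trivial (by norm_num)) U S V hV hS hF
    linarith

lemma base5 : ∀ H : ℕ, Bd ι 5 9 (2 ^ H) (16 * H ^ 2)
  | 0 => by simpa using Bd.trivial (ι := ι) (s := 5) (show 1 < 9 by norm_num)
  | H + 1 => by
    intro U S V hV hS hF
    have := recBd (ι := ι) (s := 3) (k := 9) (k1 := 5) (k2 := 3) (k3 := 3) (p := 2 ^ H) (q := 2)
      (m := 2 ^ (H + 1)) (by positivity) le_rfl (by norm_num) (by norm_num) (by norm_num)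
      (by rw [pow_succ]) (base5 H) (base4 H) (bd3 _) (Bd.trivial (by norm_num)) U S V hV hS hF
    refine this.trans ?_
    rw [zero_mul, add_zero]
    apply Nat.mul_le_mul_right
    nlinarith

lemma ceil_le {m p : ℕ} (hp : 2 ≤ p) (h : p ≤ m) :
    ∃ q, m ≤ p * q ∧ q ≤ m ∧ p * q ≤ 2 * m := by
  have h1 := Nat.div_add_mod m p
  have h2 := Nat.mod_lt m (show 0 < p by omega)
  have h3 : m / p ≤ m / 2 := Nat.div_le_div_left hp (by norm_num)
  refine ⟨m / p + 1, ?_, ?_, ?_⟩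
  · rw [mul_add]; omega
  · omega
  · rw [mul_add]; omega

lemma bd4 : ∀ d h : ℕ, Bd ι 4 (2 * d + 5) (AA d h) (240 * (h + 1))
  | 0, h => by
    rw [AA_zero]
    exact (base4 (20 + h)).mono (by norm_num) le_rfl (by omega)
  | d + 1, 0 => by
    rw [AA_succ_zero]
    exact (base4 20).mono (by omega) le_rfl (by norm_num)
  | d + 1, h + 1 => by
    intro U S V hV hS hF
    have hpge := AA_ge (d + 1) h
    have ih := bd4 (d + 1) h
    rw [AA_succ_succ] at hV
    set p := AA (d + 1) h
    by_cases hVp : V.card ≤ p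
    · exact (ih U S V hVp hS hF).trans (Nat.mul_le_mul_right _ (by omega))
    obtain ⟨q, hq1, hq2, hq3⟩ := ceil_le (show 2 ≤ p by omega) (show p ≤ V.card by omega)
    have := recBd (ι := ι) (s := 2) (k := 2 * (d + 1) + 5) (k1 := 3) (k2 := 2) (k3 := 2 * d + 5)
      (p := p) (q := q) (m := V.card) (by omega) (by omega) (by norm_num) (by norm_num) (by omega)
      hq1 ih (bd3 _) (bd2 _)
      ((bd4 d (gg p)).mono le_rfl (hq2.trans hV) le_rfl) U S V le_rfl hS hF
    obtain ⟨g1, g2⟩ := gg_sq (show 8 ≤ p by omega)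
    have h4 : 4 * (gg p + 1) ≤ p := by nlinarith
    have h5 : 2 * ((gg p + 1) * q) ≤ V.card := by nlinarith
    nlinarith
termination_by d h => (d, h)

/-- The weights needed for five intervals. -/
def RR : ℕ → ℕ
  | 0 => 9
  | d + 1 => 2 * RR d + 4 * d + 7

lemma RR_eq (d : ℕ) : RR d + 4 * d + 11 = 20 * 2 ^ d := by
  induction d with
  | zero => rfl
  | succ d ih => rw [RR, pow_succ]; omega

lemma RR_ge (d : ℕ) : 9 ≤ RR d := by
  induction d with
  | zero => exact le_rfl
  | succ d ih => rw [RR]; omega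

lemma bd5 : ∀ d h : ℕ, Bd ι 5 (RR d) (AA d h) (6400 * (h + 1) ^ 2)
  | 0, h => by
    rw [AA_zero]
    refine (base5 (20 + h)).mono (RR_ge 0) le_rfl ?_
    have : (20 + h) ^ 2 ≤ (20 * (h + 1)) ^ 2 := Nat.pow_le_pow_left (by omega) 2
    nlinarith
  | d + 1, 0 => by
    rw [AA_succ_zero]
    exact (base5 20).mono (RR_ge _) le_rfl (by norm_num)
  | d + 1, h + 1 => by
    intro U S V hV hS hF
    have hpge := AA_ge (d + 1) h
    have ih := bd5 (d + 1) h
    have ih4 := bd4 (ι := ι) (d + 1) h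
    have hR := RR_ge d
    rw [AA_succ_succ] at hV
    set p := AA (d + 1) h
    by_cases hVp : V.card ≤ p
    · exact (ih U S V hVp hS hF).trans (Nat.mul_le_mul_right _ (by gcongr; omega))
    obtain ⟨q, hq1, hq2, hq3⟩ := ceil_le (show 2 ≤ p by omega) (show p ≤ V.card by omega)
    have := recBd (ι := ι) (s := 3) (k := RR (d + 1)) (k1 := 2 * (d + 1) + 5) (k2 := 3)
      (k3 := RR d)
      (p := p) (q := q) (m := V.card) (by omega) (by omega) (by omega) (by norm_num)
      (by rw [RR]; omega)
      hq1 ih ih4 (bd3 _)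
      ((bd5 d (gg p)).mono le_rfl (hq2.trans hV) le_rfl) U S V le_rfl hS hF
    obtain ⟨g1, g2⟩ := gg_sq (show 8 ≤ p by omega)
    have h5 : (gg p + 1) ^ 2 * q ≤ V.card := by nlinarith
    refine this.trans ?_
    calc _ ≤ (6400 * (h + 1) ^ 2 + 2 * (240 * (h + 1)) + 4) * V.card + 6400 * V.card := by
          rw [mul_assoc 6400 _ q]
          omega
      _ = (6400 * (h + 1) ^ 2 + 2 * (240 * (h + 1)) + 4 + 6400) * V.card := by ring
      _ ≤ _ := by
          apply Nat.mul_le_mul_right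
          nlinarith
termination_by d h => (d, h)

end R4

namespace R4

/-- The Ackermann-type inverse of `alphaHier` (index shifted by one). -/
def BB : ℕ → ℕ → ℕ
  | 0, h => 2 * h
  | d + 1, h => Nat.rec 1 (fun _ p => BB d p) h

lemma BB_zero (h : ℕ) : BB 0 h = 2 * h := by rw [BB]
lemma BB_succ_zero (d : ℕ) : BB (d + 1) 0 = 1 := by rw [BB]; rfl
lemma BB_succ_succ (d h : ℕ) : BB (d + 1) (h + 1) = BB d (BB (d + 1) h) := by
  conv_lhs => rw [BB]
  conv_rhs => rw [BB]

lemma two_mul_add_one_le (a : ℕ) : 2 * a + 1 ≤ 2 ^ (a + 1) := by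
  induction a with
  | zero => norm_num
  | succ a ih => rw [pow_succ]; omega

lemma BB_le_AA : ∀ d h h' : ℕ, h ≤ h' → BB d h ≤ gg (AA d h')
  | 0, h, h', hh => by
    rw [BB_zero, AA_zero]
    unfold gg
    rw [Nat.le_sqrt, Nat.le_div_iff_mul_le (by norm_num)]
    have h1 : h < 2 ^ h := Nat.lt_two_pow_self
    have h2 : h * h ≤ 2 ^ (h + 15) := by
      clear hh
      induction h with
      | zero => positivity
      | succ n ih =>
        have h3 := ih Nat.lt_two_pow_self
        have h4 := two_mul_add_one_le n
        rw [show n + 1 + 15 = n + 15 + 1 from rfl, pow_succ 2 (n + 15)]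
        have : 2 ^ (n + 1) ≤ 2 ^ (n + 15) := Nat.pow_le_pow_right (by norm_num) (by omega)
        nlinarith
    calc 2 * h * (2 * h) * 8 = 32 * (h * h) := by ring
      _ ≤ 32 * 2 ^ (h + 15) := Nat.mul_le_mul_left _ h2
      _ = 2 ^ (20 + h) := by rw [show 20 + h = h + 15 + 5 by omega, pow_succ, pow_succ, pow_succ, pow_succ, pow_succ]; ring
      _ ≤ _ := Nat.pow_le_pow_right (by norm_num) (by omega)
  | d + 1, 0, h', hh => by
    rw [BB_succ_zero]
    exact (gg_sq (by have := AA_ge (d + 1) h'; omega)).1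
  | d + 1, h + 1, 0, hh => by omega
  | d + 1, h + 1, h' + 1, hh => by
    rw [BB_succ_succ, AA_succ_succ]
    exact BB_le_AA d _ _ (BB_le_AA (d + 1) h h' (by omega))
termination_by d h => (d, h)

lemma iterCount_le {f : ℕ → ℕ} (hf : ∀ m, 2 ≤ m → f m < m) :
    ∀ fuel m : ℕ, iterCount f fuel m ≤ m - 1
  | 0, m => by simp [iterCount]
  | fuel + 1, m => by
    rw [iterCount]
    split_ifs with h
    · omega
    · have := hf m (by omega)
      have := iterCount_le hf fuel (f m)
      omega

lemma alphaHier_lt : ∀ d m : ℕ, 2 ≤ m → alphaHier (d + 1) m < m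
  | 0, m, hm => by rw [alphaHier]; omega
  | d + 1, m, hm => by
    rw [alphaHier]
    have := iterCount_le (alphaHier_lt d) m m
    omega

lemma BB_pos : ∀ d h : ℕ, 1 ≤ h → 1 ≤ BB d h
  | 0, h, hh => by rw [BB_zero]; omega
  | d + 1, 0, hh => by omega
  | d + 1, 1, hh => by rw [BB_succ_succ, BB_succ_zero]; exact BB_pos d 1 le_rfl
  | d + 1, h + 2, hh => by rw [BB_succ_succ]; exact BB_pos d _ (BB_pos (d + 1) (h + 1) (by omega))
termination_by d h => (d, h)

lemma BB_pos' (d h : ℕ) : 1 ≤ BB (d + 1) h := by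
  rcases Nat.eq_zero_or_pos h with rfl | h1
  · rw [BB_succ_zero]
  · exact BB_pos _ _ h1

lemma iterCount_bound (d : ℕ)
    (ih : ∀ m h, alphaHier (d + 1) m ≤ h → m ≤ BB d h) :
    ∀ fuel m h : ℕ, m ≤ fuel → iterCount (alphaHier (d + 1)) fuel m ≤ h → m ≤ BB (d + 1) h
  | 0, m, h, hm, _ => by omega
  | fuel + 1, m, h, hm, hi => by
    rw [iterCount] at hi
    split_ifs at hi with h1
    · exact h1.trans (BB_pos' d h)
    · obtain ⟨h', rfl⟩ : ∃ h', h = h' + 1 := ⟨h - 1, by omega⟩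
      have := alphaHier_lt d m (by omega)
      have h2 := iterCount_bound d ih fuel (alphaHier (d + 1) m) h' (by omega) (by omega)
      rw [BB_succ_succ]
      exact ih _ _ h2

lemma alpha_le_BB : ∀ d m h : ℕ, alphaHier (d + 1) m ≤ h → m ≤ BB d h
  | 0, m, h, hm => by rw [alphaHier] at hm; rw [BB_zero]; omega
  | d + 1, m, h, hm => by
    rw [alphaHier] at hm
    exact iterCount_bound d (alpha_le_BB d) m m h le_rfl hm

lemma iterCount_fuel {f : ℕ → ℕ} (hf : ∀ m, 2 ≤ m → f m < m) :
    ∀ fuel m : ℕ, m ≤ fuel → iterCount f fuel m = iterCount f m m := by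
  intro fuel
  induction fuel using Nat.strong_induction_on with
  | _ fuel ih =>
    intro m hm
    rcases Nat.eq_or_lt_of_le hm with h | h
    · rw [h]
    rcases Nat.lt_or_ge 1 m with h1 | h1
    · obtain ⟨F, rfl⟩ : ∃ F, fuel = F + 1 := ⟨fuel - 1, by omega⟩
      obtain ⟨M, rfl⟩ : ∃ M, m = M + 1 := ⟨m - 1, by omega⟩
      have h2 := hf (M + 1) h1
      rw [iterCount, iterCount, if_neg (by omega), if_neg (by omega),
        ih F (by omega) _ (by omega), ih M (by omega) _ (by omega)]
    · cases fuel with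
      | zero => simp at h
      | succ F =>
        rw [iterCount, if_pos h1]
        cases m with
        | zero => rfl
        | succ M => rw [iterCount, if_pos h1]

lemma alpha_rec (d m : ℕ) (hm : 2 ≤ m) :
    alphaHier (d + 2) m = 1 + alphaHier (d + 2) (alphaHier (d + 1) m) := by
  have h := alphaHier_lt d m hm
  obtain ⟨M, rfl⟩ : ∃ M, m = M + 1 := ⟨m - 1, by omega⟩
  conv_lhs => rw [alphaHier, iterCount, if_neg (by omega)]
  rw [iterCount_fuel (alphaHier_lt d) M _ (by omega), alphaHier]

lemma alpha_le_pred (d m : ℕ) : alphaHier (d + 2) m ≤ m - 1 := by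
  rw [alphaHier]
  exact iterCount_le (alphaHier_lt d) m m

lemma alpha_le_half : ∀ d m : ℕ, 2 ≤ m → alphaHier (d + 1) m ≤ (m + 1) / 2
  | 0, m, _ => by rw [alphaHier]
  | d + 1, m, hm => by
    have h1 := alpha_le_half d m hm
    have h2 := alpha_rec d m hm
    have h3 := alpha_le_pred d (alphaHier (d + 1) m)
    rw [show d + 1 + 1 = d + 2 from rfl]
    omega

lemma alpha_dec (d m : ℕ) (h : 4 ≤ alphaHier (d + 1) m) (hm : 2 ≤ m) :
    alphaHier (d + 2) m < alphaHier (d + 1) m := by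
  have h1 := alpha_rec d m hm
  have h2 := alpha_rec d (alphaHier (d + 1) m) (by omega)
  have h3 := alpha_le_half d (alphaHier (d + 1) m) (by omega)
  have h4 := alpha_le_pred d (alphaHier (d + 1) (alphaHier (d + 1) m))
  omega

lemma alpha_ex (m : ℕ) : ∃ k, 1 ≤ k ∧ alphaHier k m ≤ 3 := by
  by_contra hcon
  push Not at hcon
  have hm : 2 ≤ m := by
    have := hcon 1 le_rfl
    rw [alphaHier] at this
    omega
  have : ∀ d, alphaHier (d + 1) m + d ≤ m := by
    intro d
    induction d with
    | zero =>
      have := alphaHier_lt 0 m hm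
      omega
    | succ d ih =>
      have := alpha_dec d m (hcon (d + 1) (by omega)) hm
      rw [show d + 1 + 1 = d + 2 from rfl]
      omega
  have := this (m + 1)
  omega

lemma invAck_spec (n : ℕ) : 1 ≤ invAck n ∧ n ≤ AA (invAck n - 1) 3 := by
  have h : 1 ≤ invAck n ∧ alphaHier (invAck n) n ≤ 3 :=
    Nat.sInf_mem (s := {k : ℕ | 1 ≤ k ∧ alphaHier k n ≤ 3}) (alpha_ex n)
  refine ⟨h.1, ?_⟩
  obtain ⟨d, hd⟩ : ∃ d, invAck n = d + 1 := ⟨invAck n - 1, by omega⟩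
  rw [hd] at h ⊢
  exact ((alpha_le_BB d n 3 h.2).trans (BB_le_AA d 3 3 le_rfl)).trans (gg_le _)

end R4

namespace R4

variable {ι : Type} [DecidableEq ι]

/-- All strict orders on `T` are realized by members of `F`. -/
def Shat (F : Finset (ι → ℕ)) (T : Finset ι) : Prop :=
  ∀ e : ι → ℕ, Set.InjOn e T → ∃ f ∈ F, ∀ x ∈ T, ∀ y ∈ T, e x < e y → f x < f y

/-- No five positions are shattered. -/
def NS (F : Finset (ι → ℕ)) : Prop := ∀ T : Finset ι, T.card = 5 → ¬ Shat F T

/-- `A` is a box with sides of size `t` shattered by `F`. -/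
def Box (N t : ℕ) (E : Finset ι) (F : Finset (ι → ℕ)) (A : ι → Finset ℕ) : Prop :=
  (∀ x, A x ⊆ Finset.range N) ∧ (∀ x, x ∉ E → A x = ∅) ∧ (∀ x, A x ≠ ∅ → (A x).card = t) ∧
  ∀ h : ι → ℕ, (∀ x, A x ≠ ∅ → h x ∈ A x) → ∃ f ∈ F, ∀ x, A x ≠ ∅ → f x = h x

lemma le_add_choose (x t : ℕ) (ht : 1 ≤ t) : x ≤ t + x.choose t := by
  induction x with
  | zero => omega
  | succ x ih =>
    obtain ⟨t, rfl⟩ : ∃ u, t = u + 1 := ⟨t - 1, by omega⟩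
    rw [Nat.choose_succ_succ']
    rcases Nat.lt_or_ge x t with h | h
    · omega
    · have := Nat.choose_pos h
      omega

lemma sauer {N t : ℕ} (ht : 1 ≤ t) (E : Finset ι) : ∀ F : Finset (ι → ℕ),
    (∀ f ∈ F, (∀ x, x ∉ E → f x = 0) ∧ ∀ x ∈ E, f x < N) →
    ∃ B : Finset (ι → Finset ℕ), (∀ A ∈ B, Box N t E F A) ∧ F.card ≤ t ^ E.card * B.card := by
  classical
  induction E using Finset.induction_on with
  | empty =>
    intro F hF
    have h1 : F.card ≤ 1 := Finset.card_le_one.mpr (by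
      intro a ha b hb
      funext x
      rw [(hF a ha).1 x (by simp), (hF b hb).1 x (by simp)])
    rcases F.eq_empty_or_nonempty with h | ⟨f, hf⟩
    · exact ⟨∅, by simp, by simp [h]⟩
    · refine ⟨{fun _ => ∅}, ?_, by simpa using h1⟩
      intro A hA
      rw [Finset.mem_singleton] at hA
      subst hA
      exact ⟨by simp, by simp, by simp, fun h _ => ⟨f, hf, by simp⟩⟩
  | insert e E he ih =>
    intro F hF
    set F' := F.image (fun f => Function.update f e 0) with hF'
    let ext : (ι → ℕ) → Finset ℕ := fun p =>
      (Finset.range N).filter (fun b => Function.update p e b ∈ F)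
    let G : Finset ℕ → Finset (ι → ℕ) := fun B => F'.filter (fun p => B ⊆ ext p)
    have hF'p : ∀ f ∈ F', (∀ x, x ∉ E → f x = 0) ∧ ∀ x ∈ E, f x < N := by
      intro p hp
      obtain ⟨f, hf, rfl⟩ := Finset.mem_image.mp hp
      refine ⟨?_, ?_⟩
      · intro x hx
        by_cases hxe : x = e
        · subst hxe; simp
        · rw [Function.update_of_ne hxe]
          exact (hF f hf).1 x (by simp [hxe, hx])
      · intro x hx
        have hxe : x ≠ e := fun h => he (h ▸ hx)
        rw [Function.update_of_ne hxe]
        exact (hF f hf).2 x (by simp [hx])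
    obtain ⟨B0, hB0, hc0⟩ := ih F' hF'p
    have hG : ∀ B, ∃ C : Finset (ι → Finset ℕ), (∀ A ∈ C, Box N t E (G B) A) ∧
        (G B).card ≤ t ^ E.card * C.card := fun B =>
      ih (G B) (fun f hf => hF'p f (Finset.mem_filter.mp hf).1)
    choose BB hBB hcB using hG
    let PP := Finset.powersetCard t (Finset.range N)
    have hPne : ∀ B ∈ PP, B ≠ ∅ := by
      intro B hB h
      have := (Finset.mem_powersetCard.mp hB).2
      rw [h] at this
      simp at this
      omega
    let Q : Finset ℕ → Finset (ι → Finset ℕ) := fun B =>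
      (BB B).image (fun A => Function.update A e B)
    have hQe : ∀ B, ∀ A ∈ Q B, A e = B := by
      intro B A hA
      obtain ⟨A', _, rfl⟩ := Finset.mem_image.mp hA
      simp
    have hQc : ∀ B, (Q B).card = (BB B).card := by
      intro B
      apply Finset.card_image_of_injOn
      intro A hA A' hA' h
      funext x
      by_cases hxe : x = e
      · rw [hxe, (hBB B A hA).2.1 e he, (hBB B A' hA').2.1 e he]
      · have := congrFun h x
        simpa [Function.update_of_ne hxe] using this
    refine ⟨B0 ∪ PP.biUnion Q, ?_, ?_⟩
    · intro A hA
      rcases Finset.mem_union.mp hA with hA | hA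
      · obtain ⟨h1, h2, h3, h4⟩ := hB0 A hA
        refine ⟨h1, fun x hx => h2 x (fun h => hx (Finset.mem_insert_of_mem h)), h3, ?_⟩
        intro h hh
        obtain ⟨p, hp, hpx⟩ := h4 h hh
        obtain ⟨f, hf, rfl⟩ := Finset.mem_image.mp hp
        refine ⟨f, hf, fun x hx => ?_⟩
        have hxe : x ≠ e := by
          rintro rfl
          exact hx (h2 x he)
        have := hpx x hx
        rwa [Function.update_of_ne hxe] at this
      · obtain ⟨B, hB, hA⟩ := Finset.mem_biUnion.mp hA
        obtain ⟨A, hAB, rfl⟩ := Finset.mem_image.mp hA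
        obtain ⟨h1, h2, h3, h4⟩ := hBB B A hAB
        obtain ⟨hBN, hBt⟩ := Finset.mem_powersetCard.mp hB
        refine ⟨?_, ?_, ?_, ?_⟩
        · intro x
          by_cases hxe : x = e
          · subst hxe; simpa using hBN
          · simpa [Function.update_of_ne hxe] using h1 x
        · intro x hx
          rw [Finset.mem_insert, not_or] at hx
          rw [Function.update_of_ne hx.1]
          exact h2 x hx.2
        · intro x hx
          by_cases hxe : x = e
          · subst hxe; simpa using hBt
          · rw [Function.update_of_ne hxe] at hx ⊢
            exact h3 x hx
        · intro h hh
          obtain ⟨p, hp, hpx⟩ := h4 h (by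
            intro x hx
            have hxe : x ≠ e := by
              rintro rfl
              exact hx (h2 x he)
            have := hh x
            rw [Function.update_of_ne hxe] at this
            exact this hx)
          have hpB := (Finset.mem_filter.mp hp).2
          have hhe := hh e
          rw [Function.update_self] at hhe
          have := (Finset.mem_filter.mp (hpB (hhe (hPne B hB)))).2
          refine ⟨_, this, ?_⟩
          intro x hx
          by_cases hxe : x = e
          · subst hxe; simp
          · rw [Function.update_of_ne hxe] at hx ⊢
            exact hpx x hx
    · have hdis : Disjoint B0 (PP.biUnion Q) := by
        rw [Finset.disjoint_left]
        intro A hA hA'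
        obtain ⟨B, hB, hA'⟩ := Finset.mem_biUnion.mp hA'
        have := hQe B A hA'
        rw [(hB0 A hA).2.1 e he] at this
        exact hPne B hB this.symm
      have hcard : (B0 ∪ PP.biUnion Q).card = B0.card + ∑ B ∈ PP, (BB B).card := by
        rw [Finset.card_union_of_disjoint hdis, Finset.card_biUnion]
        · simp only [hQc]
        · intro B _ B' _ hne
          rw [Function.onFun, Finset.disjoint_left] 
          intro A hA hA'
          exact hne ((hQe B A hA).symm.trans (hQe B' A hA'))
      have hfib : ∀ p ∈ F', (F.filter (fun f => Function.update f e 0 = p)).card ≤ (ext p).card := by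
        intro p _
        apply Finset.card_le_card_of_injOn (fun f => f e)
        · intro f hf
          obtain ⟨hfF, rfl⟩ := Finset.mem_filter.mp hf
          refine Finset.mem_filter.mpr ⟨Finset.mem_range.mpr ((hF f hfF).2 e (by simp)), ?_⟩
          simpa using hfF
        · intro f hf f' hf' h
          have h1 := (Finset.mem_filter.mp hf).2
          have h2 := (Finset.mem_filter.mp hf').2
          funext x
          by_cases hxe : x = e
          · rw [hxe]; exact h
          · have := congrFun (h1.trans h2.symm) x
            simpa [Function.update_of_ne hxe] using this
      have hdc : ∑ p ∈ F', ((ext p).card).choose t = ∑ B ∈ PP, (G B).card := by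
        have e1 : ∀ p ∈ F', ((ext p).card).choose t = (PP.filter (fun B => B ⊆ ext p)).card := by
          intro p _
          rw [← Finset.card_powersetCard]
          congr 1
          ext B
          simp only [PP, Finset.mem_powersetCard, Finset.mem_filter]
          constructor
          · rintro ⟨h1, h2⟩
            exact ⟨⟨h1.trans (Finset.filter_subset _ _), h2⟩, h1⟩
          · rintro ⟨⟨_, h2⟩, h1⟩
            exact ⟨h1, h2⟩
        rw [Finset.sum_congr rfl e1]
        simp only [G, Finset.card_filter]
        rw [Finset.sum_comm]
      have hm : F.card ≤ t * F'.card + ∑ B ∈ PP, (G B).card := by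
        calc F.card = ∑ p ∈ F', (F.filter (fun f => Function.update f e 0 = p)).card :=
              Finset.card_eq_sum_card_image _ _
          _ ≤ ∑ p ∈ F', (t + ((ext p).card).choose t) :=
              Finset.sum_le_sum fun p hp => (hfib p hp).trans (le_add_choose _ _ ht)
          _ = _ := by rw [Finset.sum_add_distrib, hdc, Finset.sum_const, smul_eq_mul, mul_comm]
      rw [hcard, Finset.card_insert_of_notMem he]
      calc F.card ≤ _ := hm
        _ ≤ t * (t ^ E.card * B0.card) + ∑ B ∈ PP, t ^ (E.card + 1) * (BB B).card := by
            refine Nat.add_le_add (Nat.mul_le_mul_left _ hc0) (Finset.sum_le_sum fun B _ => ?_)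
            refine (hcB B).trans (Nat.mul_le_mul_right _ ?_)
            exact Nat.pow_le_pow_right ht (by omega)
        _ = _ := by rw [← Finset.mul_sum]; ring

end R4

namespace R4

variable {ι : Type} [DecidableEq ι]

lemma card_bound {N : ℕ} {E : Finset ι} {F : Finset (ι → ℕ)}
    (hF : ∀ f ∈ F, (∀ x, x ∉ E → f x = 0) ∧ ∀ x ∈ E, f x < N) : F.card ≤ N ^ E.card := by
  have : F.card ≤ (E.pi (fun _ => Finset.range N)).card := by
    apply Finset.card_le_card_of_injOn (fun f x _ => f x)
    · intro f hf
      refine Finset.mem_coe.mpr (Finset.mem_pi.mpr fun x hx => ?_)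
      exact Finset.mem_range.mpr ((hF f hf).2 x hx)
    · intro f hf f' hf' h
      funext x
      by_cases hx : x ∈ E
      · exact congrFun (congrFun h x) hx
      · rw [(hF f hf).1 x hx, (hF f' hf').1 x hx]
  simpa using this

/-- restriction of a function to `J` (zero elsewhere) -/
def rs (J : Finset ι) (f : ι → ℕ) : ι → ℕ := fun x => if x ∈ J then f x else 0

lemma ns_rs {F : Finset (ι → ℕ)} (h : NS F) (J : Finset ι) [DecidableEq (ι → ℕ)] :
    NS (F.image (rs J)) := by
  intro T hT hS
  apply h T hT
  intro e he
  obtain ⟨g, hg, hgx⟩ := hS e he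
  obtain ⟨f, hf, rfl⟩ := Finset.mem_image.mp hg
  refine ⟨f, hf, ?_⟩
  have hTJ : ∀ x ∈ T, x ∈ J := by
    intro x hx
    by_contra hxJ
    obtain ⟨y, hy, hyx⟩ := Finset.exists_mem_ne (show 1 < T.card by omega) x
    -- an order in which `x` is above `y`
    obtain ⟨g, hg, hgx⟩ := hS (fun z => if z = x then e x + e y + ∑ w ∈ T, e w + 1 else e z) (by
      intro a ha b hb hab
      have h1 : e a ≤ ∑ w ∈ T, e w := Finset.single_le_sum (fun _ _ => Nat.zero_le _) ha
      have h2 : e b ≤ ∑ w ∈ T, e w := Finset.single_le_sum (fun _ _ => Nat.zero_le _) hb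
      dsimp only at hab
      split_ifs at hab with h3 h4 h4
      · rw [h3, h4]
      · omega
      · omega
      · exact he ha hb hab)
    have := hgx y hy x hx (by simp only [if_neg hyx, if_true]; omega)
    obtain ⟨f, hf, rfl⟩ := Finset.mem_image.mp hg
    simp [rs, hxJ] at this
  intro x hx y hy hxy
  have := hgx x hx y hy hxy
  simpa [rs, hTJ x hx, hTJ y hy] using this

lemma ns_div {F : Finset (ι → ℕ)} (h : NS F) (b : ℕ) [DecidableEq (ι → ℕ)] :
    NS (F.image (fun f x => f x / b)) := by
  intro T hT hS
  apply h T hT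
  intro e he
  obtain ⟨g, hg, hgx⟩ := hS e he
  obtain ⟨f, hf, rfl⟩ := Finset.mem_image.mp hg
  refine ⟨f, hf, fun x hx y hy hxy => ?_⟩
  have := hgx x hx y hy hxy
  by_contra hle
  exact absurd (Nat.div_le_div_right (c := b) (not_lt.mp hle)) (not_le.mpr this)

lemma box_free {N t : ℕ} {E : Finset ι} {F : Finset (ι → ℕ)} (h : NS F) {A : ι → Finset ℕ}
    (hA : Box N t E F A) (U : Finset ι) : Free 5 U A := by
  rintro T _ hc ⟨g, hg, hgx⟩
  apply h T hc
  intro e he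
  let r : ι → ℕ := fun x => (T.filter (fun y => e y < e x)).card
  have hr : ∀ x ∈ T, r x < 5 := by
    intro x hx
    rw [← hc]
    apply Finset.card_lt_card
    rw [Finset.filter_ssubset]
    exact ⟨x, hx, by simp⟩
  have hmono : ∀ x ∈ T, ∀ y ∈ T, e x < e y → r x < r y := by
    intro x hx y hy hxy
    apply Finset.card_lt_card
    rw [Finset.ssubset_iff_of_subset]
    · exact ⟨x, by simp [hx, hxy], by simp⟩
    · intro z hz
      simp only [Finset.mem_filter] at hz ⊢
      exact ⟨hz.1, by omega⟩
  have hch : ∀ x, ∃ v, (A x ≠ ∅ → v ∈ A x) ∧ (x ∈ T → g v = r x) := by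
    intro x
    by_cases hx : x ∈ T
    · obtain ⟨v, hv, hgv⟩ := hgx x hx (r x) (hr x hx)
      exact ⟨v, fun _ => hv, fun _ => hgv⟩
    · rcases (A x).eq_empty_or_nonempty with h0 | ⟨v, hv⟩
      · exact ⟨0, fun h => absurd h0 h, fun h => absurd h hx⟩
      · exact ⟨v, fun _ => hv, fun h => absurd h hx⟩
  choose v hv1 hv2 using hch
  obtain ⟨f, hf, hfx⟩ := hA.2.2.2 v hv1
  have hne : ∀ x ∈ T, A x ≠ ∅ := by
    intro x hx
    obtain ⟨w, hw, _⟩ := hgx x hx 0 (by norm_num)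
    exact Finset.ne_empty_of_mem hw
  refine ⟨f, hf, fun x hx y hy hxy => ?_⟩
  rw [hfx x (hne x hx), hfx y (hne y hy)]
  have h1 := hmono x hx y hy hxy
  rw [← hv2 x hx, ← hv2 y hy] at h1
  by_contra hle
  exact absurd (hg (not_lt.mp hle)) (not_le.mpr h1)

lemma exists_enum (t : ℕ) : ∃ en : Finset ℕ → ℕ → ℕ,
    ∀ s : Finset ℕ, s.card = t → (Finset.range t).image (en s) = s := by
  have : ∀ s : Finset ℕ, ∃ f : ℕ → ℕ, s.card = t → (Finset.range t).image f = s := by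
    intro s
    refine ⟨fun l => if h : l < s.card then s.equivFin.symm ⟨l, h⟩ else 0, ?_⟩
    intro hs
    ext y
    simp only [Finset.mem_image, Finset.mem_range]
    constructor
    · rintro ⟨l, hl, rfl⟩
      rw [dif_pos (by omega)]
      exact Subtype.property _
    · intro hy
      refine ⟨s.equivFin ⟨y, hy⟩, by rw [← hs]; exact Fin.is_lt _, ?_⟩
      rw [dif_pos (Fin.is_lt _)]
      simp
  choose en h using this
  exact ⟨en, h⟩

/-- The number of shattered boxes with given support. -/
lemma boxes_fiber {N t : ℕ} {E J : Finset ι} {F : Finset (ι → ℕ)} [DecidableEq (ι → ℕ)]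
    (B : Finset (ι → Finset ℕ))
    (hB : ∀ A ∈ B, Box N t E F A ∧ ∀ x, x ∈ J ↔ A x ≠ ∅) :
    B.card ≤ (F.image (rs J)).card ^ t := by
  obtain ⟨en, hen⟩ := exists_enum t
  have : B.card ≤ (Fintype.piFinset (fun _ : Fin t => F.image (rs J))).card := by
    apply Finset.card_le_card_of_injOn (fun (A : ι → Finset ℕ) (l : Fin t) => rs J (fun x => en (A x) l))
    · intro A hA
      obtain ⟨hbox, hJ⟩ := hB A hA
      refine Finset.mem_coe.mpr (Fintype.mem_piFinset.mpr fun l => ?_)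
      obtain ⟨f, hf, hfx⟩ := hbox.2.2.2 (fun x => en (A x) l) (by
        intro x hx
        have := hen (A x) (hbox.2.2.1 x hx)
        have h2 : en (A x) l ∈ (Finset.range t).image (en (A x)) :=
          Finset.mem_image_of_mem _ (Finset.mem_range.mpr l.2)
        rwa [this] at h2)
      refine Finset.mem_image.mpr ⟨f, hf, ?_⟩
      funext x
      by_cases hx : x ∈ J
      · simp only [rs, if_pos hx]
        exact hfx x ((hJ x).mp hx)
      · simp only [rs, if_neg hx]
    · intro A hA A' hA' h
      obtain ⟨hbox, hJ⟩ := hB A hA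
      obtain ⟨hbox', hJ'⟩ := hB A' hA'
      funext x
      by_cases hx : x ∈ J
      · rw [← hen (A x) (hbox.2.2.1 x ((hJ x).mp hx)), ← hen (A' x) (hbox'.2.2.1 x ((hJ' x).mp hx))]
        apply Finset.image_congr
        intro l hl
        have := congrFun (congrFun h ⟨l, by simpa using hl⟩) x
        simpa [rs, hx] using this
      · have h1 : A x = ∅ := not_not.mp (fun hh => hx ((hJ x).mpr hh))
        have h2 : A' x = ∅ := not_not.mp (fun hh => hx ((hJ' x).mpr hh))
        rw [h1, h2]
  simpa using this

theorem count {n0 t K L Z : ℕ} (hL : Bd ι 5 t n0 L) (ht : 1 ≤ t) (hK : 2 ≤ K) (hL1 : 1 ≤ L)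
    (hZ : 2 * (2 * L * t * K) * t * Z ≤ Z ^ K) (hZ1 : 1 ≤ Z) :
    ∀ n ≤ n0, ∀ (E : Finset ι) (F : Finset (ι → ℕ)), E.card ≤ n →
      (∀ f ∈ F, (∀ x, x ∉ E → f x = 0) ∧ ∀ x ∈ E, f x < n) → NS F →
      F.card ≤ (2 * (2 * L * t * K) * t * Z) ^ n := by
  classical
  intro n
  induction n using Nat.strong_induction_on with
  | _ n ih =>
  intro hn E F hE hF hNS
  set b := 2 * L * t * K with hb
  set Y := 2 * b * t * Z with hY
  have hLtK : 2 ≤ L * t * K := by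
    have : 1 ≤ L * t := Nat.mul_pos hL1 ht
    nlinarith
  have hb2 : b = 2 * (L * t * K) := by rw [hb]; ring
  have hbY : b ≤ Y := by
    rw [hY]
    calc b = b * 1 * 1 := by ring
      _ ≤ (2 * b) * t * Z := by gcongr; omega
  rcases Nat.lt_or_ge n b with hnb | hnb
  · calc F.card ≤ n ^ E.card := card_bound hF
      _ ≤ Y ^ E.card := Nat.pow_le_pow_left (by omega) _
      _ ≤ Y ^ n := Nat.pow_le_pow_right (by omega) hE
  have hbpos : 0 < b := by omega
  set N := n / b + 1 with hN
  set M := L * N with hM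
  have hMK : M * t * K ≤ n := by
    have h1 := Nat.div_mul_le_self n b
    have : 2 * (M * t * K) = n / b * b + b := by
      rw [hM, hN]
      generalize n / b = u
      rw [hb2]
      ring
    omega
  have hNM : N ≤ M := Nat.le_mul_of_pos_left _ hL1
  have hMtK : 2 * M ≤ M * t * K := by
    calc 2 * M = M * 1 * 2 := by ring
      _ ≤ _ := by gcongr
  have hMn : M < n := by omega
  set F1 := F.image (fun f x => f x / b) with hF1
  have hF1p : ∀ f ∈ F1, (∀ x, x ∉ E → f x = 0) ∧ ∀ x ∈ E, f x < N := by
    intro g hg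
    obtain ⟨f, hf, rfl⟩ := Finset.mem_image.mp hg
    refine ⟨fun x hx => by simp [(hF f hf).1 x hx], fun x hx => ?_⟩
    have := Nat.div_le_div_right (c := b) ((hF f hf).2 x hx).le
    dsimp only
    omega
  have hNS1 : NS F1 := ns_div hNS b
  have s1 : F.card ≤ b ^ E.card * F1.card := by
    apply Finset.card_le_mul_card_image
    intro a _
    have h1 : (F.filter (fun f => (fun x => f x / b) = a)).card ≤
        (F.image (fun f x => f x % b)).card := by
      apply Finset.card_le_card_of_injOn (fun f x => f x % b)
      · intro f hf
        exact Finset.mem_image_of_mem _ (Finset.mem_filter.mp hf).1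
      · intro f hf f' hf' h
        have e1 := (Finset.mem_filter.mp hf).2
        have e2 := (Finset.mem_filter.mp hf').2
        funext x
        have e3 := congrFun (e1.trans e2.symm) x
        have e4 := congrFun h x
        dsimp only at e3 e4
        rw [← Nat.div_add_mod (f x) b, ← Nat.div_add_mod (f' x) b, e3, e4]
    refine h1.trans (card_bound ?_)
    intro g hg
    obtain ⟨f, hf, rfl⟩ := Finset.mem_image.mp hg
    exact ⟨fun x hx => by simp [(hF f hf).1 x hx], fun x _ => Nat.mod_lt _ hbpos⟩
  obtain ⟨B, hB, s2⟩ := sauer ht E F1 hF1p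
  let Js : (ι → Finset ℕ) → Finset ι := fun A => E.filter (fun x => A x ≠ ∅)
  have hJs : ∀ A ∈ B, ∀ x, x ∈ Js A ↔ A x ≠ ∅ := by
    intro A hA x
    simp only [Js, Finset.mem_filter, and_iff_right_iff_imp]
    intro hx
    by_contra hxE
    exact hx ((hB A hA).2.1 x hxE)
  have hJc : ∀ A ∈ B, (Js A).card ≤ M := by
    intro A hA
    have := hL (Js A) A (Finset.range N) (by simp; omega) ?_ (box_free hNS1 (hB A hA) _)
    · simpa using this
    · intro x hx
      exact ⟨(hB A hA).1 x, ((hB A hA).2.2.1 x ((hJs A hA x).mp hx)).ge⟩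
  have s3 : B.card ≤ (Y ^ M) ^ t * 2 ^ E.card := by
    have h1 : (B.image Js).card ≤ 2 ^ E.card := by
      rw [← Finset.card_powerset]
      apply Finset.card_le_card
      intro J hJ
      obtain ⟨A, _, rfl⟩ := Finset.mem_image.mp hJ
      exact Finset.mem_powerset.mpr (Finset.filter_subset _ _)
    refine (Finset.card_le_mul_card_image (f := Js) B ((Y ^ M) ^ t) ?_).trans
      (Nat.mul_le_mul_left _ h1)
    intro J hJ
    obtain ⟨A0, hA0, rfl⟩ := Finset.mem_image.mp hJ
    refine (boxes_fiber (N := N) (t := t) (E := E) (J := Js A0) (F := F1) _ ?_).trans ?_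
    · intro A hA
      obtain ⟨hA, hAJ⟩ := Finset.mem_filter.mp hA
      refine ⟨hB A hA, ?_⟩
      rw [← hAJ]
      exact hJs A hA
    · apply Nat.pow_le_pow_left
      refine ih M hMn (by omega) (Js A0) _ (hJc A0 hA0) ?_ (ns_rs hNS1 _)
      intro g hg
      obtain ⟨f, hf, rfl⟩ := Finset.mem_image.mp hg
      refine ⟨fun x hx => by simp [rs, hx], fun x hx => ?_⟩
      have := (hF1p f hf).2 x (Finset.mem_filter.mp hx).1
      simp only [rs, if_pos hx]
      omega
  have hYZ : (Y ^ M) ^ t ≤ Z ^ n := by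
    calc (Y ^ M) ^ t = Y ^ (M * t) := (pow_mul Y M t).symm
      _ ≤ (Z ^ K) ^ (M * t) := Nat.pow_le_pow_left hZ _
      _ = Z ^ (M * t * K) := by rw [← pow_mul, mul_comm]
      _ ≤ Z ^ n := Nat.pow_le_pow_right hZ1 hMK
  calc F.card ≤ b ^ E.card * (t ^ E.card * ((Y ^ M) ^ t * 2 ^ E.card)) :=
        s1.trans (Nat.mul_le_mul_left _ (s2.trans (Nat.mul_le_mul_left _ s3)))
    _ = (2 * b * t) ^ E.card * (Y ^ M) ^ t := by
        rw [mul_pow (2 * b) t, mul_pow 2 b]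
        generalize (Y ^ M) ^ t = q
        generalize b ^ E.card = r
        ring
    _ ≤ (2 * b * t) ^ n * Z ^ n := by
        apply Nat.mul_le_mul _ hYZ
        exact Nat.pow_le_pow_right (by positivity) hE
    _ = Y ^ n := by rw [← mul_pow]

end R4

namespace R4

lemma ns_of_vc {n : ℕ} {P : Finset (Equiv.Perm (Fin n))} (hP : VCDimLE n 4 P) :
    NS (P.image (fun (π : Equiv.Perm (Fin n)) (x : Fin n) => (π x : ℕ))) := by
  classical
  intro T hT hS
  set a := T.orderEmbOfFin hT with ha
  have haT : ∀ i, a i ∈ T := fun i => Finset.orderEmbOfFin_mem T hT i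
  refine hP a ⟨a.strictMono, fun σ => ?_⟩
  have hinv : ∀ i, Function.invFun a (a i) = i := Function.leftInverse_invFun a.injective
  have hsurj : ∀ x ∈ T, ∃ i, a i = x := by
    intro x hx
    have : x ∈ Set.range a := by rw [ha, Finset.range_orderEmbOfFin]; exact hx
    exact this
  obtain ⟨f, hf, hlt⟩ := hS (fun x => (σ (Function.invFun a x) : ℕ)) (by
    intro x hx y hy h
    obtain ⟨i, rfl⟩ := hsurj x hx
    obtain ⟨j, rfl⟩ := hsurj y hy
    simp only [hinv] at h
    rw [σ.injective (Fin.ext h)])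
  obtain ⟨π, hπ, rfl⟩ := Finset.mem_image.mp hf
  have key : ∀ i j, σ i < σ j → π (a i) < π (a j) := by
    intro i j h
    have := hlt (a i) (haT i) (a j) (haT j) (by simp only [hinv]; exact h)
    exact this
  refine ⟨π, hπ, fun i j => ⟨key i j, fun h => ?_⟩⟩
  rcases lt_trichotomy (σ i) (σ j) with h1 | h1 | h1
  · exact h1
  · rw [σ.injective h1] at h
    exact absurd h (lt_irrefl _)
  · exact absurd h (lt_asymm (key j i h1))

lemma nat_bound {n : ℕ} {P : Finset (Equiv.Perm (Fin n))} (hP : VCDimLE n 4 P) :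
    ∃ a : ℕ, a = invAck n ∧ 1 ≤ a ∧
      P.card ≤ (800 * 102400 * (3200 * 102400) * a * 4 ^ a) ^ n := by
  classical
  obtain ⟨h1, h2⟩ := invAck_spec n
  refine ⟨invAck n, rfl, h1, ?_⟩
  generalize invAck n = a at h1 h2
  obtain ⟨d, rfl⟩ : ∃ d, a = d + 1 := ⟨a - 1, by omega⟩
  have hB : Bd (Fin n) 5 (10 * 2 ^ (d + 1)) n 102400 := by
    refine (bd5 (ι := Fin n) d 3).mono ?_ h2 ?_
    · have := RR_eq d
      rw [pow_succ]; omega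
    · norm_num
  have h2d : d + 2 ≤ 2 ^ (d + 1) := Nat.lt_two_pow_self (n := d + 1)
  have hpow : (2 : ℕ) ^ (d + 1) * 2 ^ (d + 1) = 4 ^ (d + 1) := by
    rw [← mul_pow]; norm_num
  have hW : 2 * (2 * 102400 * (10 * 2 ^ (d + 1)) * (d + 2)) * (10 * 2 ^ (d + 1)) =
      400 * 102400 * (d + 2) * 4 ^ (d + 1) := by
    rw [← hpow]; ring
  have hinj : Function.Injective
      (fun (π : Equiv.Perm (Fin n)) (x : Fin n) => (π x : ℕ)) := by
    intro π π' h
    ext x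
    exact congrFun h x
  have := count (ι := Fin n) (n0 := n) (t := 10 * 2 ^ (d + 1)) (K := d + 2) (L := 102400)
    (Z := 3200 * 102400) hB (Nat.mul_pos (by norm_num) (by positivity)) (by omega) (by norm_num)
    (by
      rw [hW, pow_succ]
      apply Nat.mul_le_mul_right
      calc 400 * 102400 * (d + 2) * 4 ^ (d + 1)
          ≤ (400 * 102400) ^ (d + 1) * 2 ^ (d + 1) * 4 ^ (d + 1) := by
            gcongr
            exact Nat.le_self_pow (by omega) _
        _ = (3200 * 102400) ^ (d + 1) := by
            rw [← mul_pow, ← mul_pow]; norm_num)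
    (by norm_num) n le_rfl Finset.univ _ (by simp) (by
      intro f hf
      obtain ⟨π, _, rfl⟩ := Finset.mem_image.mp hf
      exact ⟨fun x hx => absurd (Finset.mem_univ x) hx, fun x _ => (π x).2⟩) (ns_of_vc hP)
  rw [Finset.card_image_of_injective _ hinj, hW] at this
  refine this.trans (Nat.pow_le_pow_left ?_ _)
  generalize 4 ^ (d + 1) = q
  nlinarith [Nat.zero_le (d * q)]

lemma real_bound {n a c N : ℕ} (ha : 1 ≤ a) (hc : 1 ≤ c) (h : N ≤ (c * a * 4 ^ a) ^ n) :
    (N : ℝ) ≤ (2 : ℝ) ^ ((n : ℝ) * (2 * (a : ℝ) + 3 * Real.logb 2 a + Real.logb 2 c)) := by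
  have ha' : (1 : ℝ) ≤ a := by exact_mod_cast ha
  have hc' : (1 : ℝ) ≤ c := by exact_mod_cast hc
  have hl : 0 ≤ Real.logb 2 a := Real.logb_nonneg (by norm_num) ha'
  have h1 : ((c * a * 4 ^ a : ℕ) : ℝ) = (2 : ℝ) ^ (2 * (a : ℝ) + Real.logb 2 a + Real.logb 2 c) := by
    rw [Real.rpow_add (by norm_num), Real.rpow_add (by norm_num),
      Real.rpow_logb (by norm_num) (by norm_num) (by linarith),
      Real.rpow_logb (by norm_num) (by norm_num) (by linarith),
      Real.rpow_mul (by norm_num), Real.rpow_natCast]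
    push_cast
    norm_num
    ring
  calc (N : ℝ) ≤ ((c * a * 4 ^ a : ℕ) : ℝ) ^ n := by exact_mod_cast h
    _ = (2 : ℝ) ^ ((2 * (a : ℝ) + Real.logb 2 a + Real.logb 2 c) * n) := by
        rw [h1, Real.rpow_mul (by norm_num), Real.rpow_natCast]
    _ ≤ _ := by
        apply Real.rpow_le_rpow_of_exponent_le (by norm_num)
        rw [mul_comm]
        gcongr
        linarith

end R4

/-- There is a constant `C` such that for every `n ≥ 1`, every family of
`n`-permutations with VC-dimension at most 4 has size at most
`2 ^ (n·(2α(n) + 3 log₂ α(n) + C))`. -/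
theorem r4_upper_bound :
    ∃ C : ℝ, ∀ n : ℕ, 1 ≤ n →
      ∀ P : Finset (Equiv.Perm (Fin n)), VCDimLE n 4 P →
        (P.card : ℝ) ≤
          (2 : ℝ) ^ ((n : ℝ) * (2 * (invAck n : ℝ) + 3 * Real.logb 2 (invAck n) + C)) := by
  refine ⟨Real.logb 2 ((800 * 102400 * (3200 * 102400) : ℕ) : ℝ), fun n _ P hP => ?_⟩
  obtain ⟨a, ha, ha1, hb⟩ := R4.nat_bound hP
  rw [← ha]
  exact R4.real_bound ha1 (by norm_num) hb
end
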